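/- Let Ω ⊂ ℝ² be a bounded, open, connected set with Lipschitz boundary and let u ∈ W^{1,1}(Ω;S¹). Then for every ε > 0 there exists a finite set C_ε ⊂ Ω such that 𝒜(u, Ω ∖ C_ε) ≤ ∫_Ω √(1 + |∇u|²) dx + ε, where |∇u| is the Frobenius norm of the weak gradient of u. -/

import Mathlib

open MeasureTheory Metric Filter Set
open scoped ENNReal NNReal Topology Classical

noncomputable section

abbrev R2 := EuclideanSpace ℝ (Fin 2)

/-- `Ω ⊂ ℝ²` has Lipschitz boundary: near every boundary point, after a rigid motion,
`Ω` coincides with the open region strictly above the graph of a Lipschitz function. -/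
def HasLipschitzBoundary (Ω : Set R2) : Prop :=
  ∀ p ∈ frontier Ω, ∃ r : ℝ, 0 < r ∧ ∃ (f : R2 ≃ᵢ R2) (γ : ℝ → ℝ) (L : ℝ≥0),
    LipschitzWith L γ ∧ ∀ x ∈ Metric.ball p r, (x ∈ Ω ↔ γ (f x 0) < f x 1)

/-- `G` is the weak (distributional) gradient of `u` on `Ω`:
`∫_Ω u_i ∂_j φ = -∫_Ω G_{ij} φ` for all test functions `φ ∈ C_c^∞(Ω)`. -/
def IsWeakGradient (Ω : Set R2) (u : R2 → R2) (G : R2 → Matrix (Fin 2) (Fin 2) ℝ) : Prop :=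
  ∀ φ : R2 → ℝ, ContDiff ℝ (⊤ : ℕ∞) φ → HasCompactSupport φ → tsupport φ ⊆ Ω →
    ∀ i j : Fin 2,
      (∫ x in Ω, u x i * fderiv ℝ φ x (EuclideanSpace.single j 1)) =
        - ∫ x in Ω, G x i j * φ x

/-- `u ∈ W^{1,1}(Ω;ℝ²)` with weak gradient `G`. -/
def MemW11 (Ω : Set R2) (u : R2 → R2) (G : R2 → Matrix (Fin 2) (Fin 2) ℝ) : Prop :=
  IntegrableOn u Ω ∧ (∀ i j : Fin 2, IntegrableOn (fun x => G x i j) Ω) ∧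
    IsWeakGradient Ω u G

/-- `|u| = 1` a.e. in `Ω`. -/
def SphereValued (Ω : Set R2) (u : R2 → R2) : Prop :=
  ∀ᵐ x ∂(volume.restrict Ω), ‖u x‖ = 1

/-- Frobenius norm of a `2×2` matrix. -/
def frob (M : Matrix (Fin 2) (Fin 2) ℝ) : ℝ :=
  Real.sqrt (∑ i, ∑ j, (M i j) ^ 2)

/-- Jacobian matrix of a map `v : ℝ² → ℝ²`. -/
def jacobianMatrix (v : R2 → R2) (x : R2) : Matrix (Fin 2) (Fin 2) ℝ :=
  Matrix.of fun i j => fderiv ℝ v x (EuclideanSpace.single j 1) i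

/-- Classical graph area `A(v,A) = ∫_A √(1 + |∇v|² + (Jv)²)` of a `C¹` map. -/
def classicalArea (A : Set R2) (v : R2 → R2) : ℝ≥0∞ :=
  ∫⁻ x in A, ENNReal.ofReal
    (Real.sqrt (1 + (∑ i, ∑ j, (jacobianMatrix v x i j) ^ 2) + (jacobianMatrix v x).det ^ 2))

/-- `L¹`-relaxed area functional `𝒜(u,A)`. -/
def relaxedArea (u : R2 → R2) (A : Set R2) : ℝ≥0∞ :=
  sInf { a : ℝ≥0∞ | ∃ v : ℕ → R2 → R2,
    (∀ k, ContDiffOn ℝ 1 (v k) A) ∧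
    (∀ k, IntegrableOn (fun x => v k x - u x) A) ∧
    Tendsto (fun k => ∫ x in A, ‖v k x - u x‖) atTop (nhds 0) ∧
    a = Filter.liminf (fun k => classicalArea A (v k)) atTop }

/-- `λ_u = (1/2)(u₁ ∇^⊥u₂ − u₂ ∇^⊥u₁)`, computed from the weak gradient `G`. -/
def lambdaVec (u : R2 → R2) (G : R2 → Matrix (Fin 2) (Fin 2) ℝ) (x : R2) : Fin 2 → ℝ :=
  ![ (1 / 2) * (-(u x 0) * G x 1 1 + u x 1 * G x 0 1),
     (1 / 2) * (u x 0 * G x 1 0 - u x 1 * G x 0 0) ]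

/-- Distributional Jacobian pairing `⟨Det(∇u), φ⟩ = ∫_Ω λ_u · ∇φ`. -/
def detPairing (Ω : Set R2) (u : R2 → R2) (G : R2 → Matrix (Fin 2) (Fin 2) ℝ)
    (φ : R2 → ℝ) : ℝ :=
  ∫ x in Ω, ∑ j, lambdaVec u G x j * fderiv ℝ φ x (EuclideanSpace.single j 1)

/-- `φ ∈ Lip₀(Ω)`: Lipschitz on `cl(Ω)` and vanishing on `∂Ω`. -/
def MemLip0 (Ω : Set R2) (φ : R2 → ℝ) : Prop :=
  (∃ L : ℝ≥0, LipschitzOnWith L φ (closure Ω)) ∧ ∀ p ∈ frontier Ω, φ p = 0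

/-- Admissible test functions for the flat norm: Lipschitz constant `≤ L` on `cl(Ω)`,
vanishing on `Z`, and bounded by `1` on `cl(Ω)`. -/
def FlatAdmissible (Ω Z : Set R2) (L : ℝ≥0) (φ : R2 → ℝ) : Prop :=
  LipschitzOnWith L φ (closure Ω) ∧ (∀ p ∈ Z, φ p = 0) ∧ ∀ p ∈ closure Ω, |φ p| ≤ 1

/-- Flat norm of a functional `F`, with vanishing condition on the set `Z`. -/
def flatNormOn (Ω Z : Set R2) (L : ℝ≥0) (F : (R2 → ℝ) → ℝ) : ℝ≥0∞ :=
  ⨆ φ ∈ {φ : R2 → ℝ | FlatAdmissible Ω Z L φ}, ENNReal.ofReal (F φ)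

/-- Flat norm of a functional `F` on `Lip₀(Ω)`; `L = 2` gives `‖·‖_{flat,α}` (α = 1/2),
`L = 1` gives `‖·‖_flat`. -/
def flatNorm (Ω : Set R2) (L : ℝ≥0) (F : (R2 → ℝ) → ℝ) : ℝ≥0∞ :=
  flatNormOn Ω (frontier Ω) L F

/-- `d̄_Ω(x,y) = min{|x−y|, dist(x,∂Ω) + dist(y,∂Ω)}`. -/
def dbar (Ω : Set R2) (x y : R2) : ℝ :=
  min (dist x y) (Metric.infDist x (frontier Ω) + Metric.infDist y (frontier Ω))

/-- Countably subadditive interior envelope `𝒜**(u,V)` (relative to `Ω`). -/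
def envA (u : R2 → R2) (Ω V : Set R2) : ℝ≥0∞ :=
  sInf { a : ℝ≥0∞ | ∃ A : ℕ → Set R2,
    (∀ k, IsOpen (A k) ∧ A k ⊆ Ω) ∧ V ⊆ ⋃ k, A k ∧ a = ∑' k, relaxedArea u (A k) }

/-- Property `(P_f)` for a finite family of pairs of points of `cl(Ω)`. -/
def SatisfiesPf (Ω : Set R2) {n : ℕ} (x y : Fin n → R2) : Prop :=
  (∀ k, (x k ∈ Ω ∧ y k ∈ frontier Ω ∧ dist (x k) (y k) = Metric.infDist (x k) (frontier Ω)) ∨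
        (y k ∈ Ω ∧ x k ∈ frontier Ω ∧ dist (x k) (y k) = Metric.infDist (y k) (frontier Ω))) ∧
  ∀ i j, x i ∈ Ω → y j ∈ Ω → x i ≠ y j

/-- The points of the family `x, y` lying in `Ω` are distinct and three by three
not collinear. -/
def InteriorPointsGeneric (Ω : Set R2) {n : ℕ} (x y : Fin n → R2) : Prop :=
  (∀ a b : Fin n ⊕ Fin n, Sum.elim x y a ∈ Ω → Sum.elim x y b ∈ Ω → a ≠ b →
    Sum.elim x y a ≠ Sum.elim x y b) ∧
  ∀ a b c : Fin n ⊕ Fin n, Sum.elim x y a ∈ Ω → Sum.elim x y b ∈ Ω → Sum.elim x y c ∈ Ω →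
    a ≠ b → a ≠ c → b ≠ c →
    ¬ Collinear ℝ ({Sum.elim x y a, Sum.elim x y b, Sum.elim x y c} : Set R2)

/-- `ι(w₁,w₂) = (w₁,−w₂)`. -/
def conjPt (w : R2) : R2 := (WithLp.equiv 2 (Fin 2 → ℝ)).symm ![w 0, -(w 1)]

/-- `u` is a (positive/negative) vortex around the points of the family lying in `Ω`:
the closed discs of radii `ρ` are contained in `Ω` and pairwise disjoint,
`u(z) = (z−x_i)/|z−x_i|` on `B_{ρ}(x_i)` and `u(z) = ι((z−y_j)/|z−y_j|)` on `B_{ρ}(y_j)`. -/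
def VortexAt (Ω : Set R2) (u : R2 → R2) {n : ℕ} (x y : Fin n → R2)
    (ρ : Fin n ⊕ Fin n → ℝ) : Prop :=
  (∀ a, Sum.elim x y a ∈ Ω → Metric.closedBall (Sum.elim x y a) (ρ a) ⊆ Ω) ∧
  (∀ a b, a ≠ b → Sum.elim x y a ∈ Ω → Sum.elim x y b ∈ Ω →
    Disjoint (Metric.closedBall (Sum.elim x y a) (ρ a))
      (Metric.closedBall (Sum.elim x y b) (ρ b))) ∧
  (∀ i, x i ∈ Ω → ∀ᵐ z ∂(volume.restrict (Metric.ball (x i) (ρ (Sum.inl i)))),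
    u z = ‖z - x i‖⁻¹ • (z - x i)) ∧
  (∀ i, y i ∈ Ω → ∀ᵐ z ∂(volume.restrict (Metric.ball (y i) (ρ (Sum.inr i)))),
    u z = conjPt (‖z - y i‖⁻¹ • (z - y i)))

/-- The energy `E(I_P, I_D, τ)` of a partition `{I_Dᶜ, I_D}` of `I` and an injection
`τ : I_D → I`. -/
def energy (Ω : Set R2) {n : ℕ} (x y : Fin n → R2) (ID : Finset (Fin n))
    (τ : Fin n → Fin n) : ℝ≥0∞ :=
  ((IDᶜ.filter fun k => x k ∈ Ω).card : ℝ≥0∞) +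
  (((Finset.univ \ ID.image τ).filter fun j => y j ∈ Ω).card : ℝ≥0∞) +
  2 * ∑ k ∈ ID, μH[1] (segment ℝ (y (τ k)) (x k) ∩ Ω)

/-!
Approximate `u` in `W^{1,1}(Ω)` by smooth maps `a n` on `ℝ²` with values in the closed unit disc.
Averaging over `y` in a small disc (Hardt–Lin) shows that, for `n` large and a suitable regular
value `y` of `a n`, the map `p = (a n - y) / |a n - y|` is `W^{1,1}`-close to `u`; by Sard's theorem
and compactness the fibre `a n = y` is finite in `Ω`, and it is the set `C` to remove.

With `p` fixed, `w n = a n * conj p` converges a.e. to the circle-valued map `u * conj p` and its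
gradient is eventually small in `L¹`. The disc is retracted to the circle by a map `F ζ`,
essentially the projection from a pole `ζ` outside the disc, whose derivative is controlled by a
Poisson kernel. As this kernel has mean one over the position of the pole, some choice of poles
`ζ n` keeps the gradient of `F (ζ n) ∘ w n` small in `L¹`. The maps `v n = p * F (ζ n) (w n)` are
circle-valued and `C¹` off `C`, so their Jacobian determinant vanishes; they converge to `u`, and
the lower limit of their areas exceeds `∫ √(1 + |∇u|²)` by at most `ε`.
-/

open scoped Convolution
open ContinuousLinearMap (lsmul)

section Translation

variable {X E : Type*} [AddCommGroup X] [TopologicalSpace X] [IsTopologicalAddGroup X]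
  [MeasurableSpace X] [BorelSpace X] {μ : Measure X} [IsLocallyFiniteMeasure μ]
  [μ.InnerRegularCompactLTTop] [μ.IsAddLeftInvariant] [NormedAddCommGroup E]

theorem tendsto_lintegral_enorm_translate_sub {g : X → E} (hg : Integrable g μ) :
    Tendsto (fun w => ∫⁻ x, ‖g (x - w) - g x‖ₑ ∂μ) (𝓝 0) (𝓝 0) := by
  have hg₁ : MemLp g 1 μ := memLp_one_iff_integrable.2 hg
  have : Fact ((1 : ℝ≥0∞) ≠ ⊤) := ⟨ENNReal.one_ne_top⟩
  have hcont : Continuous fun w : X => DomAddAct.mk (-w) +ᵥ hg₁.toLp g :=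
    (DomAddAct.continuous_mk.comp continuous_neg).vadd continuous_const
  have hlim := tendsto_iff_edist_tendsto_0.1 (hcont.tendsto 0)
  refine hlim.congr fun w => ?_
  simp only [neg_zero, DomAddAct.mk_zero, zero_vadd, DomAddAct.mk_vadd_toLp, Lp.edist_toLp_toLp,
    eLpNorm_one_eq_lintegral_enorm, Pi.sub_apply, vadd_eq_add, neg_add_eq_sub]

end Translation

section Convolution

theorem lintegral_enorm_of_nonneg_of_integral_eq_one {α : Type*}
    [MeasurableSpace α] {μ : Measure α} {k : α → ℝ} (hk₀ : ∀ w, 0 ≤ k w)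
    (hk₁ : ∫ w, k w ∂μ = 1) : ∫⁻ w, ‖k w‖ₑ ∂μ = 1 := by
  have hk : Integrable k μ := .of_integral_ne_zero (by simp [hk₁])
  simp_rw [← ofReal_integral_norm_eq_lintegral_enorm hk, Real.norm_of_nonneg (hk₀ _), hk₁,
    ENNReal.ofReal_one]

theorem convolution_lsmul_sub {X E : Type*} [AddGroup X] [MeasurableSpace X] {μ : Measure X}
    [NormedAddCommGroup E] [NormedSpace ℝ E] [CompleteSpace E] {k : X → ℝ} {g : X → E} {x : X}
    (hk₁ : ∫ w, k w ∂μ = 1) (hx : ConvolutionExistsAt k g x (lsmul ℝ ℝ) μ) :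
    (k ⋆[lsmul ℝ ℝ, μ] g) x - g x = ∫ w, k w • (g (x - w) - g x) ∂μ := by
  have hk : Integrable k μ := .of_integral_ne_zero (by simp [hk₁])
  have hint : Integrable (fun w => k w • g (x - w)) μ := hx
  simp_rw [smul_sub]
  rw [integral_sub hint (hk.smul_const _), integral_smul_const, hk₁, one_smul]
  rfl

variable {X E : Type*} [NormedAddCommGroup X] [NormedSpace ℝ X] [FiniteDimensional ℝ X]
  [MeasurableSpace X] [BorelSpace X] {μ : Measure X} [μ.IsAddHaarMeasure]
  [NormedAddCommGroup E] [NormedSpace ℝ E] {k : X → ℝ} {g : X → E}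

theorem lintegral_enorm_convolution_sub_le [CompleteSpace E] (hk₁ : ∫ w, k w ∂μ = 1)
    (hg : Integrable g μ) :
    ∫⁻ x, ‖(k ⋆[lsmul ℝ ℝ, μ] g) x - g x‖ₑ ∂μ ≤
      ∫⁻ w, ‖k w‖ₑ * ∫⁻ x, ‖g (x - w) - g x‖ₑ ∂μ ∂μ := by
  have hk : Integrable k μ := .of_integral_ne_zero (by simp [hk₁])
  have hmeas : AEMeasurable (fun p : X × X => ‖k p.2 • (g (p.1 - p.2) - g p.1)‖ₑ) (μ.prod μ) :=
    (hk.1.comp_snd.smul ((hg.1.comp_quasiMeasurePreserving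
      (quasiMeasurePreserving_sub_of_right_invariant μ μ)).sub hg.1.comp_fst)).enorm
  calc ∫⁻ x, ‖(k ⋆[lsmul ℝ ℝ, μ] g) x - g x‖ₑ ∂μ
      ≤ ∫⁻ x, ∫⁻ w, ‖k w • (g (x - w) - g x)‖ₑ ∂μ ∂μ := by
        refine lintegral_mono_ae ?_
        filter_upwards [hk.ae_convolution_exists (lsmul ℝ ℝ) hg] with x hx
        rw [convolution_lsmul_sub hk₁ hx]
        exact enorm_integral_le_lintegral_enorm _
    _ = ∫⁻ w, ∫⁻ x, ‖k w • (g (x - w) - g x)‖ₑ ∂μ ∂μ := lintegral_lintegral_swap hmeas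
    _ = ∫⁻ w, ‖k w‖ₑ * ∫⁻ x, ‖g (x - w) - g x‖ₑ ∂μ ∂μ := by
        simp_rw [enorm_smul, lintegral_const_mul' _ _ enorm_ne_top]

theorem tendsto_lintegral_enorm_convolution_sub [CompleteSpace E] {ι : Type*} {l : Filter ι}
    {k : ι → X → ℝ} (hk₀ : ∀ i w, 0 ≤ k i w) (hk₁ : ∀ i, ∫ w, k i w ∂μ = 1)
    (hsupp : Tendsto (fun i => Function.support (k i)) l (𝓝 0).smallSets) (hg : Integrable g μ) :
    Tendsto (fun i => ∫⁻ x, ‖(k i ⋆[lsmul ℝ ℝ, μ] g) x - g x‖ₑ ∂μ) l (𝓝 0) := by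
  refine ENNReal.tendsto_nhds_zero.2 fun δ hδ => ?_
  have hclose : ∀ᶠ w in 𝓝 0, ∫⁻ x, ‖g (x - w) - g x‖ₑ ∂μ ≤ δ :=
    ENNReal.tendsto_nhds_zero.1 (tendsto_lintegral_enorm_translate_sub hg) δ hδ
  filter_upwards [hsupp.eventually (eventually_smallSets_forall.2 hclose)] with i hi
  calc ∫⁻ x, ‖(k i ⋆[lsmul ℝ ℝ, μ] g) x - g x‖ₑ ∂μ
      ≤ ∫⁻ w, ‖k i w‖ₑ * ∫⁻ x, ‖g (x - w) - g x‖ₑ ∂μ ∂μ :=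
        lintegral_enorm_convolution_sub_le (hk₁ i) hg
    _ ≤ ∫⁻ w, ‖k i w‖ₑ * δ ∂μ := by
        refine lintegral_mono fun w => ?_
        by_cases hw : k i w = 0
        · simp [hw]
        · gcongr
          exact hi w hw
    _ = δ := by
        have hk : Integrable (k i) μ := .of_integral_ne_zero (by simp [hk₁])
        rw [lintegral_mul_const'' _ hk.1.enorm,
          lintegral_enorm_of_nonneg_of_integral_eq_one (hk₀ i) (hk₁ i), one_mul]

theorem norm_convolution_lsmul_le {M : ℝ} (hk₀ : ∀ w, 0 ≤ k w) (hk₁ : ∫ w, k w ∂μ = 1)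
    (hg : ∀ᵐ x ∂μ, ‖g x‖ ≤ M) (x : X) : ‖(k ⋆[lsmul ℝ ℝ, μ] g) x‖ ≤ M := by
  have hk : Integrable k μ := .of_integral_ne_zero (by simp [hk₁])
  have hgx : ∀ᵐ w ∂μ, ‖g (x - w)‖ ≤ M :=
    (quasiMeasurePreserving_sub_left_of_right_invariant μ x).ae hg
  calc ‖(k ⋆[lsmul ℝ ℝ, μ] g) x‖ ≤ ∫ w, k w * M ∂μ := by
        refine norm_integral_le_of_norm_le (hk.mul_const M) ?_
        filter_upwards [hgx] with w hw
        rw [ContinuousLinearMap.lsmul_apply, norm_smul, Real.norm_of_nonneg (hk₀ w)]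
        exact mul_le_mul_of_nonneg_left hw (hk₀ w)
    _ = M := by rw [integral_mul_const, hk₁, one_mul]

theorem fderiv_convolution_lsmul_apply [CompleteSpace E] (hk : ContDiff ℝ 1 k)
    (hkc : HasCompactSupport k) (hg : LocallyIntegrable g μ) (x v : X) :
    fderiv ℝ (k ⋆[lsmul ℝ ℝ, μ] g) x v = ∫ t, fderiv ℝ k (x - t) v • g t ∂μ := by
  have hint := (hkc.fderiv (𝕜 := ℝ)).convolutionExists_left ((lsmul ℝ ℝ).precompL X)
    (hk.continuous_fderiv one_ne_zero) hg x
  rw [(hkc.hasFDerivAt_convolution_left (lsmul ℝ ℝ) hk hg x).fderiv, convolution_eq_swap,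
    ContinuousLinearMap.integral_apply hint.integrable_swap]
  rfl

end Convolution

section Grad

theorem norm_le_mul_norm_of_forall_apply_le {ι E F : Type*} [Fintype ι]
    [NormedAddCommGroup E] [NormedAddCommGroup F] {K : ℝ} {v : PiLp 2 fun _ : ι => E}
    {w : PiLp 2 fun _ : ι => F} (hK : 0 ≤ K)
    (h : ∀ j, ‖v j‖ ≤ K * ‖w j‖) : ‖v‖ ≤ K * ‖w‖ := by
  rw [PiLp.norm_eq_of_L2, PiLp.norm_eq_of_L2, Real.sqrt_le_left (by positivity), mul_pow,
    Real.sq_sqrt (by positivity), Finset.mul_sum]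
  refine Finset.sum_le_sum fun j _ => ?_
  rw [← mul_pow]
  gcongr
  exact h j

variable {ι F : Type*} [NormedAddCommGroup F] [NormedSpace ℝ F] [DecidableEq ι]

/-- The gradient of a vector-valued map on a Euclidean space: the tuple of its partial derivatives,
normed so that `‖grad v x‖` is the Frobenius norm `|∇v(x)|` when `F` is a Euclidean plane. -/
def grad (v : EuclideanSpace ℝ ι → F) (x : EuclideanSpace ℝ ι) : PiLp 2 fun _ : ι => F :=
  WithLp.toLp 2 fun j => fderiv ℝ v x (EuclideanSpace.single j 1)

@[simp]
theorem grad_apply (v : EuclideanSpace ℝ ι → F) (x : EuclideanSpace ℝ ι) (j : ι) :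
    grad v x j = fderiv ℝ v x (EuclideanSpace.single j 1) :=
  rfl

variable {v w : EuclideanSpace ℝ ι → F} {x : EuclideanSpace ℝ ι}

theorem grad_congr (h : v =ᶠ[𝓝 x] w) : grad v x = grad w x := by
  ext j
  simp only [grad_apply, h.fderiv_eq]

theorem continuous_grad [Fintype ι] (hv : ContDiff ℝ 1 v) : Continuous (grad v) :=
  (PiLp.continuous_toLp 2 _).comp <| continuous_pi fun _ =>
    (hv.continuous_fderiv one_ne_zero).clm_apply continuous_const

variable [Finite ι]

theorem grad_smul {φ : EuclideanSpace ℝ ι → ℝ} (hφ : DifferentiableAt ℝ φ x)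
    (hv : DifferentiableAt ℝ v x) :
    grad (fun y => φ y • v y) x =
      φ x • grad v x + WithLp.toLp 2 fun j => grad φ x j • v x := by
  have := Fintype.ofFinite ι
  ext j
  simp [fderiv_fun_smul hφ hv]

theorem grad_mul {A : Type*} [NormedCommRing A] [NormedAlgebra ℝ A]
    {f g : EuclideanSpace ℝ ι → A} (hf : DifferentiableAt ℝ f x) (hg : DifferentiableAt ℝ g x) :
    grad (fun y => f y * g y) x = f x • grad g x + g x • grad f x := by
  have := Fintype.ofFinite ι
  ext j
  simp [fderiv_fun_mul hf hg]

theorem grad_sum {κ : Type*} (s : Finset κ) {f : κ → EuclideanSpace ℝ ι → F}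
    (hf : ∀ i ∈ s, DifferentiableAt ℝ (f i) x) :
    grad (fun y => ∑ i ∈ s, f i y) x = ∑ i ∈ s, grad (f i) x := by
  have := Fintype.ofFinite ι
  ext j
  simp [fderiv_fun_sum hf]

theorem grad_sub (hv : DifferentiableAt ℝ v x) (hw : DifferentiableAt ℝ w x) :
    grad (fun y => v y - w y) x = grad v x - grad w x := by
  have := Fintype.ofFinite ι
  ext j
  simp [fderiv_fun_sub hv hw]

theorem grad_add_const (v : EuclideanSpace ℝ ι → F) (c : F) :
    grad (fun y => v y + c) x = grad v x := by
  have := Fintype.ofFinite ι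
  ext j
  simp

end Grad

section WeakGradient

variable {ι F : Type*} [Fintype ι] [DecidableEq ι] [NormedAddCommGroup F] [NormedSpace ℝ F]

/-- `U` belongs to `W^{1,1}(Ω; F)` and its weak gradient on `Ω` is `H`. -/
structure HasWeakGrad (Ω : Set (EuclideanSpace ℝ ι)) (U : EuclideanSpace ℝ ι → F)
    (H : EuclideanSpace ℝ ι → PiLp 2 fun _ : ι => F) : Prop where
  integrableOn : IntegrableOn U Ω
  integrableOn_grad : IntegrableOn H Ω
  integral_fderiv_smul : ∀ φ : EuclideanSpace ℝ ι → ℝ, ContDiff ℝ (⊤ : ℕ∞) φ →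
    HasCompactSupport φ → tsupport φ ⊆ Ω → ∀ j,
      ∫ x in Ω, fderiv ℝ φ x (EuclideanSpace.single j 1) • U x = -∫ x in Ω, φ x • H x j

variable {Ω : Set (EuclideanSpace ℝ ι)} {U : EuclideanSpace ℝ ι → F}
  {H : EuclideanSpace ℝ ι → PiLp 2 fun _ : ι => F}

theorem HasWeakGrad.integral_fderiv_sub_smul (h : HasWeakGrad Ω U H)
    {k : EuclideanSpace ℝ ι → ℝ} (hk : ContDiff ℝ (⊤ : ℕ∞) k) (hkc : HasCompactSupport k)
    {x : EuclideanSpace ℝ ι} (hx : ∀ w ∈ tsupport k, x - w ∈ Ω) (j : ι) :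
    ∫ t in Ω, fderiv ℝ k (x - t) (EuclideanSpace.single j 1) • U t =
      ∫ t in Ω, k (x - t) • H t j := by
  have hsupp : tsupport (fun t => k (x - t)) ⊆ Ω := by
    rw [show tsupport (fun t => k (x - t)) = (fun t => x - t) ⁻¹' tsupport k from
      tsupport_comp_eq_preimage k (Homeomorph.subLeft x)]
    exact fun t ht => by simpa using hx _ ht
  have hfderiv : ∀ t, fderiv ℝ (fun t => k (x - t)) t = -fderiv ℝ k (x - t) := fun t => by
    have := ((hk.differentiable (by simp) (x - t)).hasFDerivAt.comp t
      ((hasFDerivAt_id t).const_sub x)).fderiv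
    simpa [Function.comp_def] using this
  have hweak := h.integral_fderiv_smul (fun t => k (x - t))
    (hk.comp (contDiff_const.sub contDiff_id)) (hkc.comp_homeomorph (Homeomorph.subLeft x)) hsupp j
  simpa [hfderiv, integral_neg] using hweak

theorem HasWeakGrad.grad_convolution [CompleteSpace F] (h : HasWeakGrad Ω U H)
    (hΩ : MeasurableSet Ω) {k : EuclideanSpace ℝ ι → ℝ} (hk : ContDiff ℝ (⊤ : ℕ∞) k)
    (hkc : HasCompactSupport k) {x : EuclideanSpace ℝ ι} (hx : ∀ w ∈ tsupport k, x - w ∈ Ω) :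
    grad (k ⋆[lsmul ℝ ℝ, volume] Ω.indicator U) x =
      (k ⋆[lsmul ℝ ℝ, volume] Ω.indicator H) x := by
  have hU : LocallyIntegrable (Ω.indicator U) :=
    ((integrable_indicator_iff hΩ).2 h.integrableOn).locallyIntegrable
  have hH : LocallyIntegrable (Ω.indicator H) :=
    ((integrable_indicator_iff hΩ).2 h.integrableOn_grad).locallyIntegrable
  have hint : Integrable fun t => k (x - t) • Ω.indicator H t :=
    (hkc.convolutionExists_left (lsmul ℝ ℝ) hk.continuous hH x).integrable_swap
  ext j
  calc grad (k ⋆[lsmul ℝ ℝ, volume] Ω.indicator U) x j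
      = ∫ t, fderiv ℝ k (x - t) (EuclideanSpace.single j 1) • Ω.indicator U t :=
        fderiv_convolution_lsmul_apply (hk.of_le (by exact_mod_cast le_top)) hkc hU x _
    _ = ∫ t in Ω, fderiv ℝ k (x - t) (EuclideanSpace.single j 1) • U t := by
        rw [← integral_indicator hΩ]
        refine integral_congr_ae (.of_forall fun t => ?_)
        by_cases ht : t ∈ Ω <;> simp [ht]
    _ = ∫ t in Ω, k (x - t) • H t j := h.integral_fderiv_sub_smul hk hkc hx j
    _ = (∫ t, k (x - t) • Ω.indicator H t) j := by
        rw [← integral_indicator hΩ]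
        refine .trans (integral_congr_ae (.of_forall fun t => ?_))
          ((PiLp.proj (𝕜 := ℝ) 2 (fun _ : ι => F) j).integral_comp_comm hint)
        by_cases ht : t ∈ Ω <;> simp [ht]
    _ = (k ⋆[lsmul ℝ ℝ, volume] Ω.indicator H) x j := by
        rw [convolution_eq_swap]
        rfl

end WeakGradient

section SmoothApproximation

variable {ι F : Type*} [Fintype ι] [DecidableEq ι] [NormedAddCommGroup F] [NormedSpace ℝ F]

/-- The sequence `a` of smooth maps into the closed unit ball converges to `U` in `W^{1,1}(S)`, the
weak gradient of `U` being `H`. -/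
structure IsSmoothApprox (S : Set (EuclideanSpace ℝ ι)) (U : EuclideanSpace ℝ ι → F)
    (H : EuclideanSpace ℝ ι → PiLp 2 fun _ : ι => F) (a : ℕ → EuclideanSpace ℝ ι → F) : Prop where
  contDiff : ∀ n, ContDiff ℝ (⊤ : ℕ∞) (a n)
  norm_le_one : ∀ n x, ‖a n x‖ ≤ 1
  tendsto : Tendsto (fun n => ∫⁻ x in S, ‖a n x - U x‖ₑ) atTop (𝓝 0)
  tendsto_grad : Tendsto (fun n => ∫⁻ x in S, ‖grad (a n) x - H x‖ₑ) atTop (𝓝 0)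

/-- A uniform interior cone condition: the points of `S` stay in `Ω` when moved into a small
truncated cone around a fixed direction. -/
def HasInteriorCone {E : Type*} [NormedAddCommGroup E] [NormedSpace ℝ E] (Ω S : Set E) : Prop :=
  ∃ e : E, ∃ κ > 0, ∃ s₀ > 0, ∀ x ∈ S, ∀ s ∈ Ioo 0 s₀, ∀ w ∈ closedBall (s • e) (s * κ), x + w ∈ Ω

theorem HasInteriorCone.exists_contDiffBump {E : Type*} [NormedAddCommGroup E] [NormedSpace ℝ E]
    {Ω S : Set E} (h : HasInteriorCone Ω S) :
    ∃ (c : ℕ → E) (φ : ∀ n, ContDiffBump (c n)),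
      Tendsto (fun n => ball (c n) (φ n).rOut) atTop (𝓝 0).smallSets ∧
      ∀ n, ∀ x ∈ S, ∀ w ∈ closedBall (c n) (φ n).rOut, x - w ∈ Ω := by
  obtain ⟨e, κ, hκ, s₀, hs₀, hcone⟩ := h
  let s : ℕ → ℝ := fun n => s₀ / (n + 2)
  have hs : ∀ n, s n ∈ Ioo 0 s₀ := fun n =>
    ⟨by positivity, div_lt_self hs₀ (by linarith [n.cast_nonneg (α := ℝ)])⟩
  have hs_lim : Tendsto (fun n => s n * κ + ‖s n • e‖) atTop (𝓝 0) := by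
    have hs0 : Tendsto s atTop (𝓝 0) := tendsto_const_nhds.div_atTop
      (tendsto_atTop_add_const_right _ _ tendsto_natCast_atTop_atTop)
    simpa using (hs0.mul_const κ).add (hs0.smul_const e).norm
  refine ⟨fun n => -(s n • e), fun n => ⟨s n * κ / 2, s n * κ,
    half_pos (mul_pos (hs n).1 hκ), half_lt_self (mul_pos (hs n).1 hκ)⟩, ?_, ?_⟩
  · refine (nhds_basis_ball.smallSets.tendsto_right_iff).2 fun ε hε => ?_
    filter_upwards [hs_lim.eventually_lt_const hε] with n hn
    exact ball_subset_ball' (by simpa using hn.le)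
  · intro n x hx w hw
    rw [sub_eq_add_neg]
    refine hcone x hx _ (hs n) _ ?_
    have hw' : -w ∈ -closedBall (-(s n • e)) (s n * κ) := Set.neg_mem_neg.2 hw
    rwa [neg_closedBall, neg_neg] at hw'

variable {Ω S : Set (EuclideanSpace ℝ ι)} {U : EuclideanSpace ℝ ι → F}
  {H : EuclideanSpace ℝ ι → PiLp 2 fun _ : ι => F}

theorem HasWeakGrad.exists_isSmoothApprox_of_hasInteriorCone [CompleteSpace F]
    (h : HasWeakGrad Ω U H) (hΩ : MeasurableSet Ω) (hU : ∀ᵐ x ∂volume.restrict Ω, ‖U x‖ ≤ 1)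
    (hS : MeasurableSet S) (hSΩ : S ⊆ Ω) (hcone : HasInteriorCone Ω S) :
    ∃ a, IsSmoothApprox S U H a := by
  obtain ⟨c, φ, hφ, hsub⟩ := hcone.exists_contDiffBump
  have hU_int : Integrable (Ω.indicator U) := (integrable_indicator_iff hΩ).2 h.integrableOn
  have hH_int : Integrable (Ω.indicator H) := (integrable_indicator_iff hΩ).2 h.integrableOn_grad
  have hU_le : ∀ᵐ x, ‖Ω.indicator U x‖ ≤ 1 := by
    filter_upwards [(ae_restrict_iff' hΩ).1 hU] with x hx
    by_cases hxΩ : x ∈ Ω <;> simp [hxΩ, hx]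
  have hsupp : Tendsto (fun n => Function.support ((φ n).normed volume)) atTop (𝓝 0).smallSets :=
    by simpa only [ContDiffBump.support_normed_eq] using hφ
  have hlim := tendsto_lintegral_enorm_convolution_sub (fun n => (φ n).nonneg_normed)
    (fun n => (φ n).integral_normed) hsupp hU_int
  have hlim_grad := tendsto_lintegral_enorm_convolution_sub (fun n => (φ n).nonneg_normed)
    (fun n => (φ n).integral_normed) hsupp hH_int
  refine ⟨fun n => (φ n).normed volume ⋆[lsmul ℝ ℝ, volume] Ω.indicator U, fun n => ?_,
    fun n => ?_, ?_, ?_⟩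
  · exact (φ n).hasCompactSupport_normed.contDiff_convolution_left _ (φ n).contDiff_normed
      hU_int.locallyIntegrable
  · exact norm_convolution_lsmul_le (φ n).nonneg_normed (φ n).integral_normed hU_le
  · refine tendsto_of_tendsto_of_tendsto_of_le_of_le tendsto_const_nhds hlim
      (fun n => zero_le) fun n => ?_
    refine (setLIntegral_mono' hS fun x hx => ?_).trans (setLIntegral_le_lintegral S _)
    rw [indicator_of_mem (hSΩ hx)]
  · refine tendsto_of_tendsto_of_tendsto_of_le_of_le tendsto_const_nhds hlim_grad
      (fun n => zero_le) fun n => ?_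
    refine (setLIntegral_mono' hS fun x hx => ?_).trans (setLIntegral_le_lintegral S _)
    rw [h.grad_convolution hΩ (φ n).contDiff_normed (φ n).hasCompactSupport_normed
      (by simpa only [ContDiffBump.tsupport_normed_eq] using hsub n x hx),
      indicator_of_mem (hSΩ hx)]

end SmoothApproximation

section InteriorCone

theorem hasInteriorCone_of_thickening_subset {E : Type*} [NormedAddCommGroup E] [NormedSpace ℝ E]
    {Ω S : Set E} {δ : ℝ} (hδ : 0 < δ) (h : thickening δ S ⊆ Ω) : HasInteriorCone Ω S := by
  refine ⟨0, 1, one_pos, δ, hδ, fun x hx s hs w hw => h ?_⟩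
  rw [smul_zero, mul_one, mem_closedBall_zero_iff] at hw
  exact mem_thickening_iff.2 ⟨x, hx, by simpa using hw.trans_lt hs.2⟩

theorem lt_add_of_lipschitzWith {γ : ℝ → ℝ} {L : ℝ≥0} (hγ : LipschitzWith L γ) {a b c d : ℝ}
    (hab : γ a < b) (hcd : L * |c| ≤ d) : γ (a + c) < b + d := by
  have h := (Real.dist_eq _ _ ▸ hγ.dist_le_mul (a + c) a).trans' (le_abs_self _)
  rw [Real.dist_eq, add_sub_cancel_left] at h
  linarith

theorem hasInteriorCone_inter_ball_of_lipschitzWith {Ω : Set R2} {p : R2} {r : ℝ} (hr : 0 < r)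
    (f : R2 ≃ᵃⁱ[ℝ] R2) {γ : ℝ → ℝ} {L : ℝ≥0} (hγ : LipschitzWith L γ)
    (hΩ : ∀ x ∈ ball p r, (x ∈ Ω ↔ γ (f x 0) < f x 1)) :
    HasInteriorCone Ω (Ω ∩ ball p (r / 2)) := by
  let A := f.linearIsometryEquiv
  have hL : (0 : ℝ) < L + 1 := by positivity
  refine ⟨A.symm (EuclideanSpace.single 1 1), (L + 1 : ℝ)⁻¹, inv_pos.2 hL, r / 4, by positivity,
    fun x ⟨hxΩ, hxp⟩ s ⟨hs, hsr⟩ w hw => ?_⟩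
  have hκ : s * (L + 1 : ℝ)⁻¹ ≤ s := mul_le_of_le_one_right hs.le <| inv_le_one_of_one_le₀ (by simp)
  have hAw : ‖A w - s • EuclideanSpace.single 1 1‖ ≤ s * (L + 1 : ℝ)⁻¹ := by
    rw [mem_closedBall, ← A.dist_map, map_smul, A.apply_symm_apply, dist_eq_norm] at hw
    exact hw
  have hw_norm : ‖w‖ ≤ 2 * s := by
    have hs_norm : ‖s • (EuclideanSpace.single 1 1 : R2)‖ = s := by
      rw [norm_smul, Real.norm_of_nonneg hs.le]
      simp
    have := norm_le_norm_add_norm_sub' (A w) (s • EuclideanSpace.single 1 1)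
    rw [A.norm_map, hs_norm] at this
    linarith
  have hxw : x + w ∈ ball p r := by
    rw [mem_ball, dist_eq_norm] at hxp ⊢
    have := norm_add_le (x - p) w
    rw [add_sub_right_comm]
    linarith
  have hA0 : |A w 0| ≤ s * (L + 1 : ℝ)⁻¹ := by
    simpa using (PiLp.norm_apply_le (A w - s • EuclideanSpace.single 1 1) 0).trans hAw
  have hA1 : |A w 1 - s| ≤ s * (L + 1 : ℝ)⁻¹ := by
    simpa using (PiLp.norm_apply_le (A w - s • EuclideanSpace.single 1 1) 1).trans hAw
  have hfxw : f (x + w) = f x + A w := by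
    simpa [add_comm] using f.map_vadd x w
  rw [hΩ _ hxw, hfxw, PiLp.add_apply, PiLp.add_apply]
  refine lt_add_of_lipschitzWith hγ ((hΩ x (ball_subset_ball (by linarith) hxp)).1 hxΩ) ?_
  calc (L : ℝ) * |A w 0| ≤ L * (s * (L + 1 : ℝ)⁻¹) := by gcongr
    _ = s - s * (L + 1 : ℝ)⁻¹ := by field_simp; ring
    _ ≤ A w 1 := by linarith [(abs_le.1 hA1).1]

theorem HasLipschitzBoundary.exists_hasInteriorCone {Ω : Set R2} (h : HasLipschitzBoundary Ω)
    (hΩ : IsOpen Ω) {p : R2} (hp : p ∈ closure Ω) :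
    ∃ r > 0, HasInteriorCone Ω (Ω ∩ ball p r) := by
  by_cases hpΩ : p ∈ Ω
  · obtain ⟨r, hr, hball⟩ := Metric.isOpen_iff.1 hΩ p hpΩ
    refine ⟨r / 2, half_pos hr, hasInteriorCone_of_thickening_subset (half_pos hr) ?_⟩
    calc thickening (r / 2) (Ω ∩ ball p (r / 2))
        ⊆ thickening (r / 2) (ball p (r / 2)) := thickening_subset_of_subset _ inter_subset_right
      _ ⊆ ball p r := by
        rw [thickening_ball (half_pos hr) (half_pos hr), add_halves]
      _ ⊆ Ω := hball
  · obtain ⟨r, hr, f, γ, L, hγ, hf⟩ := h p (hΩ.frontier_eq ▸ ⟨hp, hpΩ⟩)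
    exact ⟨r / 2, half_pos hr,
      hasInteriorCone_inter_ball_of_lipschitzWith hr f.toRealAffineIsometryEquiv hγ hf⟩

end InteriorCone

section PartitionOfUnity

theorem setLIntegral_le_sum_setLIntegral_inter {α κ : Type*} [MeasurableSpace α] [Fintype κ]
    {μ : Measure α} {S : Set α} {V : κ → Set α} {f : α → ℝ≥0∞} {g : κ → α → ℝ≥0∞}
    (hS : MeasurableSet S) (hV : ∀ i, MeasurableSet (V i))
    (hg : ∀ i, AEMeasurable (g i) (μ.restrict S))
    (h : ∀ x ∈ S, f x ≤ ∑ i, (V i).indicator (g i) x) :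
    ∫⁻ x in S, f x ∂μ ≤ ∑ i, ∫⁻ x in S ∩ V i, g i x ∂μ :=
  calc ∫⁻ x in S, f x ∂μ
      ≤ ∫⁻ x in S, ∑ i, (V i).indicator (g i) x ∂μ := setLIntegral_mono' hS h
    _ = ∑ i, ∫⁻ x in S, (V i).indicator (g i) x ∂μ :=
        lintegral_finsetSum' _ fun i _ => (hg i).indicator (hV i)
    _ = ∑ i, ∫⁻ x in S ∩ V i, g i x ∂μ := by
        simp only [lintegral_indicator (hV _), Measure.restrict_restrict (hV _), inter_comm]

theorem enorm_sum_smul_sub_le {α F κ : Type*} [NormedAddCommGroup F] [NormedSpace ℝ F] [Fintype κ]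
    {ζ : κ → α → ℝ} {x : α} {V : κ → Set α} (hζ₀ : ∀ i, 0 ≤ ζ i x) (hsum : ∑ i, ζ i x = 1)
    (hV : ∀ i, Function.support (ζ i) ⊆ V i) (a : κ → α → F) (u : α → F) :
    ‖∑ i, ζ i x • a i x - u x‖ₑ ≤ ∑ i, (V i).indicator (fun y => ‖a i y - u y‖ₑ) x := by
  have hle : ∀ i, ζ i x ≤ 1 := fun i =>
    hsum ▸ Finset.single_le_sum (fun i _ => hζ₀ i) (Finset.mem_univ i)
  have heq : ∑ i, ζ i x • a i x - u x = ∑ i, ζ i x • (a i x - u x) := by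
    simp_rw [smul_sub, Finset.sum_sub_distrib, ← Finset.sum_smul, hsum, one_smul]
  rw [heq]
  refine (enorm_sum_le _ _).trans (Finset.sum_le_sum fun i _ => ?_)
  by_cases hx : ζ i x = 0
  · simp [hx]
  · rw [indicator_of_mem (hV i hx), enorm_smul, Real.enorm_eq_ofReal (hζ₀ i)]
    exact mul_le_of_le_one_left zero_le (ENNReal.ofReal_le_one.2 (hle i))

theorem enorm_toLp_smul {ι F : Type*} [Fintype ι] [NormedAddCommGroup F] [NormedSpace ℝ F]
    (c : EuclideanSpace ℝ ι) (v : F) :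
    ‖(WithLp.toLp 2 fun j => c j • v : PiLp 2 fun _ : ι => F)‖ₑ = ‖c‖ₑ * ‖v‖ₑ := by
  rw [← ofReal_norm, ← ofReal_norm c, ← ofReal_norm v, ← ENNReal.ofReal_mul (norm_nonneg c),
    PiLp.norm_eq_of_L2, EuclideanSpace.norm_eq, ← Real.sqrt_sq (norm_nonneg v),
    ← Real.sqrt_mul (by positivity), Finset.sum_mul]
  simp [norm_smul, mul_pow]

variable {ι F κ : Type*} [DecidableEq ι] [NormedAddCommGroup F] [NormedSpace ℝ F] [Fintype κ]

variable {ζ : κ → EuclideanSpace ℝ ι → ℝ} {x : EuclideanSpace ℝ ι}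

theorem grad_sum_smul_sub [Finite ι] (hζ : ∀ i, DifferentiableAt ℝ (ζ i) x)
    (hsum : ∀ᶠ y in 𝓝 x, ∑ i, ζ i y = 1) {a : κ → EuclideanSpace ℝ ι → F}
    (ha : ∀ i, DifferentiableAt ℝ (a i) x) (u : F) (h : PiLp 2 fun _ : ι => F) :
    grad (fun y => ∑ i, ζ i y • a i y) x - h =
      ∑ i, (ζ i x • (grad (a i) x - h) + WithLp.toLp 2 fun j => grad (ζ i) x j • (a i x - u)) := by
  have := Fintype.ofFinite ι
  have hsum_grad : ∀ j, ∑ i, grad (ζ i) x j = 0 := fun j => by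
    have := grad_congr (v := fun y => ∑ i, ζ i y) (w := fun _ => 1) hsum
    rw [grad_sum _ fun i _ => hζ i] at this
    simpa using congr($this j)
  rw [grad_sum (f := fun i y => ζ i y • a i y) _ fun i _ => (hζ i).smul (ha i)]
  ext j
  simp only [grad_smul (hζ _) (ha _), PiLp.sub_apply, WithLp.ofLp_sum, Finset.sum_apply,
    PiLp.add_apply, PiLp.smul_apply, smul_sub, Finset.sum_add_distrib, Finset.sum_sub_distrib,
    ← Finset.sum_smul, hsum.self_of_nhds, hsum_grad, one_smul, zero_smul, sub_zero]
  abel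

variable [Fintype ι] {V : κ → Set (EuclideanSpace ℝ ι)}

theorem enorm_grad_sum_smul_sub_le (hζ : ∀ i, DifferentiableAt ℝ (ζ i) x)
    (hζ₀ : ∀ i, 0 ≤ ζ i x) (hsum : ∀ᶠ y in 𝓝 x, ∑ i, ζ i y = 1)
    (hV : ∀ i, tsupport (ζ i) ⊆ V i) {C : κ → ℝ≥0} (hC : ∀ i, ‖grad (ζ i) x‖ₑ ≤ C i)
    {a : κ → EuclideanSpace ℝ ι → F} (ha : ∀ i, DifferentiableAt ℝ (a i) x)
    (u : EuclideanSpace ℝ ι → F) (h : EuclideanSpace ℝ ι → PiLp 2 fun _ : ι => F) :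
    ‖grad (fun y => ∑ i, ζ i y • a i y) x - h x‖ₑ ≤
      ∑ i, (V i).indicator (fun y => ‖grad (a i) y - h y‖ₑ + C i * ‖a i y - u y‖ₑ) x := by
  have hle : ∀ i, ζ i x ≤ 1 := fun i =>
    hsum.self_of_nhds ▸ Finset.single_le_sum (fun i _ => hζ₀ i) (Finset.mem_univ i)
  rw [grad_sum_smul_sub hζ hsum ha (u x)]
  refine (enorm_sum_le _ _).trans (Finset.sum_le_sum fun i _ => ?_)
  by_cases hx : x ∈ tsupport (ζ i)
  · rw [indicator_of_mem (hV i hx)]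
    refine (enorm_add_le _ _).trans (add_le_add ?_ ?_)
    · rw [enorm_smul, Real.enorm_eq_ofReal (hζ₀ i)]
      exact mul_le_of_le_one_left zero_le (ENNReal.ofReal_le_one.2 (hle i))
    · rw [enorm_toLp_smul]
      gcongr
      exact hC i
  · have hgrad : grad (ζ i) x = 0 := by
      ext j
      simp [fderiv_of_notMem_tsupport ℝ hx]
    simp [image_eq_zero_of_notMem_tsupport hx, hgrad, ← Pi.zero_def]

theorem exists_enorm_grad_le {ζ : EuclideanSpace ℝ ι → F} (hζ : ContDiff ℝ 1 ζ)
    (hζc : HasCompactSupport ζ) : ∃ C : ℝ≥0, ∀ x, ‖grad ζ x‖ₑ ≤ C := by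
  have hsupp : HasCompactSupport (grad ζ) := (hζc.fderiv (𝕜 := ℝ)).mono fun x hx h => hx <| by
    ext j
    simp [h]
  obtain ⟨C, hC⟩ := hsupp.exists_bound_of_continuous (continuous_grad hζ)
  exact ⟨C.toNNReal, fun x => by
    rw [← ofReal_norm]
    exact ENNReal.ofReal_le_ofReal (hC x)⟩

variable {Ω s : Set (EuclideanSpace ℝ ι)} {U : EuclideanSpace ℝ ι → F}
  {H : EuclideanSpace ℝ ι → PiLp 2 fun _ : ι => F}

theorem IsSmoothApprox.sum_smul (hΩ : IsOpen Ω) (hΩs : Ω ⊆ s)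
    (hU : AEStronglyMeasurable U (volume.restrict Ω))
    (hH : AEStronglyMeasurable H (volume.restrict Ω)) (hV : ∀ i, MeasurableSet (V i))
    (ζ : SmoothPartitionOfUnity κ (modelWithCornersSelf ℝ (EuclideanSpace ℝ ι))
      (EuclideanSpace ℝ ι) s)
    (hζV : ζ.IsSubordinate V) (hζc : ∀ i, HasCompactSupport (ζ i))
    {a : κ → ℕ → EuclideanSpace ℝ ι → F} (h : ∀ i, IsSmoothApprox (Ω ∩ V i) U H (a i)) :
    IsSmoothApprox Ω U H fun n x => ∑ i, ζ i x • a i n x := by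
  have hζ : ∀ i, ContDiff ℝ (⊤ : ℕ∞) (ζ i) := fun i => (ζ i).contMDiff.contDiff
  have ha : ∀ i n, ContDiff ℝ 1 (a i n) := fun i n =>
    ((h i).contDiff n).of_le (by exact_mod_cast le_top)
  have hsum : ∀ x ∈ Ω, ∑ i, ζ i x = 1 := fun x hx => by
    rw [← finsum_eq_sum_of_fintype, ζ.sum_eq_one (hΩs hx)]
  have hU_meas : ∀ i n, AEMeasurable (fun x => ‖a i n x - U x‖ₑ) (volume.restrict Ω) :=
    fun i n => ((ha i n).continuous.aestronglyMeasurable.sub hU).enorm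
  have hH_meas : ∀ i n, AEMeasurable (fun x => ‖grad (a i n) x - H x‖ₑ) (volume.restrict Ω) :=
    fun i n => ((continuous_grad (ha i n)).aestronglyMeasurable.sub hH).enorm
  choose C hC using fun i => exists_enorm_grad_le ((hζ i).of_le (by exact_mod_cast le_top)) (hζc i)
  refine ⟨fun n => .sum fun i _ => (hζ i).smul ((h i).contDiff n), fun n x => ?_, ?_, ?_⟩
  · calc ‖∑ i, ζ i x • a i n x‖ ≤ ∑ i, ζ i x := norm_sum_le_of_le _ fun i _ => by
          rw [norm_smul, Real.norm_of_nonneg (ζ.nonneg i x)]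
          exact mul_le_of_le_one_right (ζ.nonneg i x) ((h i).norm_le_one n x)
      _ ≤ 1 := finsum_eq_sum_of_fintype (fun i => ζ i x) ▸ ζ.sum_le_one x
  · refine tendsto_of_tendsto_of_tendsto_of_le_of_le tendsto_const_nhds
      (by simpa using tendsto_finsetSum Finset.univ fun i _ => (h i).tendsto)
      (fun n => zero_le) fun n => setLIntegral_le_sum_setLIntegral_inter hΩ.measurableSet hV
        (fun i => hU_meas i n) fun x hx => ?_
    exact enorm_sum_smul_sub_le (fun i => ζ.nonneg i x) (hsum x hx)
      (fun i => (subset_tsupport _).trans (hζV i)) (fun i => a i n) U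
  · have hlim : Tendsto (fun n => ∑ i, ((∫⁻ x in Ω ∩ V i, ‖grad (a i n) x - H x‖ₑ) +
        C i * ∫⁻ x in Ω ∩ V i, ‖a i n x - U x‖ₑ)) atTop (𝓝 0) := by
      simpa using tendsto_finsetSum Finset.univ fun i _ => (h i).tendsto_grad.add
        (ENNReal.Tendsto.const_mul (h i).tendsto (.inr (ENNReal.coe_ne_top (r := C i))))
    refine tendsto_of_tendsto_of_tendsto_of_le_of_le tendsto_const_nhds hlim (fun n => zero_le)
      fun n => ?_
    refine (setLIntegral_le_sum_setLIntegral_inter hΩ.measurableSet hV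
      (fun i => (hH_meas i n).add ((hU_meas i n).const_mul _)) fun x hx =>
        enorm_grad_sum_smul_sub_le (fun i => (hζ i).differentiable (by simp) x)
          (fun i => ζ.nonneg i x) (eventually_of_mem (hΩ.mem_nhds hx) hsum) hζV
          (fun i => hC i x) (fun i => (ha i n).differentiable one_ne_zero x) U H).trans_eq ?_
    refine Finset.sum_congr rfl fun i _ => ?_
    have hmono : volume.restrict (Ω ∩ V i) ≤ volume.restrict Ω :=
      Measure.restrict_mono inter_subset_left le_rfl
    exact (lintegral_add_left' ((hH_meas i n).mono_measure hmono) _).trans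
      (by rw [lintegral_const_mul' _ _ ENNReal.coe_ne_top])

theorem IsSmoothApprox.exists_subseq_tendsto_ae {a : ℕ → EuclideanSpace ℝ ι → F}
    (h : IsSmoothApprox Ω U H a) (hU : AEStronglyMeasurable U (volume.restrict Ω)) :
    ∃ b, IsSmoothApprox Ω U H b ∧
      ∀ᵐ x ∂volume.restrict Ω, Tendsto (fun n => b n x) atTop (𝓝 (U x)) := by
  have hmeas : TendstoInMeasure (volume.restrict Ω) a atTop U := by
    refine tendstoInMeasure_of_tendsto_eLpNorm (p := 1) one_ne_zero
      (fun n => (h.contDiff n).continuous.aestronglyMeasurable) hU ?_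
    simpa only [eLpNorm_one_eq_lintegral_enorm, Pi.sub_apply] using h.tendsto
  obtain ⟨ns, hns, hae⟩ := hmeas.exists_seq_tendsto_ae
  exact ⟨a ∘ ns, ⟨fun n => h.contDiff _, fun n => h.norm_le_one _,
    h.tendsto.comp hns.tendsto_atTop, h.tendsto_grad.comp hns.tendsto_atTop⟩, hae⟩

end PartitionOfUnity

section LipschitzDomain

variable {F : Type*} [NormedAddCommGroup F] [NormedSpace ℝ F] [CompleteSpace F] {Ω : Set R2}
  {U : R2 → F} {H : R2 → PiLp 2 fun _ : Fin 2 => F}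

theorem HasWeakGrad.exists_isSmoothApprox (h : HasWeakGrad Ω U H) (hΩ : IsOpen Ω)
    (hΩb : Bornology.IsBounded Ω) (hΩl : HasLipschitzBoundary Ω)
    (hU : ∀ᵐ x ∂volume.restrict Ω, ‖U x‖ ≤ 1) : ∃ a, IsSmoothApprox Ω U H a := by
  choose! r hr hcone using fun p (hp : p ∈ closure Ω) => hΩl.exists_hasInteriorCone hΩ hp
  obtain ⟨t, ht, hcover⟩ := hΩb.isCompact_closure.elim_nhds_subcover (fun p => ball p (r p))
    fun p hp => ball_mem_nhds p (hr p hp)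
  obtain ⟨ζ, hζ⟩ := SmoothPartitionOfUnity.exists_isSubordinate (modelWithCornersSelf ℝ R2)
    isClosed_closure (fun p : t => ball (p : R2) (r p)) (fun _ => isOpen_ball)
    (hcover.trans (iUnion_coe_set (t : Set R2) fun p => ball p.1 (r p)).ge)
  have hζc : ∀ p, HasCompactSupport (ζ p) := fun p =>
    .of_support_subset_isCompact (isCompact_closedBall (p : R2) (r p)) <|
      (subset_tsupport _).trans ((hζ p).trans ball_subset_closedBall)
  choose a ha using fun p : t => h.exists_isSmoothApprox_of_hasInteriorCone hΩ.measurableSet hU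
    (hΩ.measurableSet.inter measurableSet_ball) inter_subset_left (hcone p (ht p p.2))
  exact ⟨_, IsSmoothApprox.sum_smul hΩ subset_closure h.integrableOn.1 h.integrableOn_grad.1
    (fun _ => measurableSet_ball) ζ hζ hζc ha⟩

end LipschitzDomain

section WeakGradientLimits

theorem tendsto_lintegral_mul_of_tendsto_zero {α : Type*} [MeasurableSpace α] {μ : Measure α}
    {f : ℕ → α → ℝ≥0∞} {h : α → ℝ≥0∞} {M : ℝ≥0∞} (hM : M ≠ ⊤)
    (hf : ∀ n, AEMeasurable (f n) μ) (hfM : ∀ n, ∀ᵐ x ∂μ, f n x ≤ M)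
    (hlim : ∀ᵐ x ∂μ, Tendsto (fun n => f n x) atTop (𝓝 0)) (hh : AEMeasurable h μ)
    (hh_fin : ∫⁻ x, h x ∂μ ≠ ⊤) :
    Tendsto (fun n => ∫⁻ x, f n x * h x ∂μ) atTop (𝓝 0) := by
  have hdom : ∫⁻ x, M * h x ∂μ ≠ ⊤ := by
    rw [lintegral_const_mul' _ _ hM]
    exact ENNReal.mul_ne_top hM hh_fin
  have := tendsto_lintegral_of_dominated_convergence' (F := fun n x => f n x * h x)
    (f := fun _ => 0) (fun x => M * h x) (fun n => (hf n).mul hh)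
    (fun n => (hfM n).mono fun x hx => mul_le_mul_left hx (h x)) hdom ?_
  · simpa using this
  · filter_upwards [hlim, ae_lt_top' hh hh_fin] with x hx hhx
    simpa using ENNReal.Tendsto.mul_const hx (.inr hhx.ne)

theorem tendsto_integral_smul_of_tendsto_lintegral {α E : Type*} [MeasurableSpace α]
    {μ : Measure α} [NormedAddCommGroup E] [NormedSpace ℝ E] {φ : α → ℝ} {g : ℕ → α → E}
    {g₀ : α → E} {M : ℝ} (hφ : AEStronglyMeasurable φ μ) (hφM : ∀ x, ‖φ x‖ ≤ M)
    (hg : ∀ n, Integrable (fun x => φ x • g n x) μ) (hg₀ : AEStronglyMeasurable g₀ μ)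
    (hlim : Tendsto (fun n => ∫⁻ x, ‖g n x - g₀ x‖ₑ ∂μ) atTop (𝓝 0)) :
    Tendsto (fun n => ∫ x, φ x • g n x ∂μ) atTop (𝓝 (∫ x, φ x • g₀ x ∂μ)) := by
  have hbound : Tendsto (fun n => ENNReal.ofReal M * ∫⁻ x, ‖g n x - g₀ x‖ₑ ∂μ) atTop (𝓝 0) := by
    simpa using ENNReal.Tendsto.const_mul hlim (.inr (ENNReal.ofReal_ne_top (r := M)))
  refine tendsto_integral_of_L1 _ (hφ.smul hg₀) (.of_forall hg) <|
    tendsto_of_tendsto_of_tendsto_of_le_of_le tendsto_const_nhds hbound (fun n => zero_le)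
      fun n => ?_
  rw [← lintegral_const_mul' _ _ ENNReal.ofReal_ne_top]
  refine lintegral_mono fun x => ?_
  rw [Pi.smul_apply', ← smul_sub, enorm_smul, ← ofReal_norm (φ x)]
  gcongr
  exact hφM x

variable {ι F : Type*} [Fintype ι] [DecidableEq ι] [NormedAddCommGroup F] [NormedSpace ℝ F]
  {Ω : Set (EuclideanSpace ℝ ι)}

theorem integral_fderiv_smul_eq_neg_integral_smul_grad {v : EuclideanSpace ℝ ι → F}
    (hv : ContDiff ℝ 1 v) {φ : EuclideanSpace ℝ ι → ℝ} (hφ : ContDiff ℝ 1 φ)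
    (hφc : HasCompactSupport φ) (hφΩ : tsupport φ ⊆ Ω) (j : ι) :
    ∫ x in Ω, fderiv ℝ φ x (EuclideanSpace.single j 1) • v x = -∫ x in Ω, φ x • grad v x j := by
  have hφ' : Continuous fun x => fderiv ℝ φ x (EuclideanSpace.single j 1) :=
    (hφ.continuous_fderiv one_ne_zero).clm_apply continuous_const
  have hv' : Continuous fun x => fderiv ℝ v x (EuclideanSpace.single j 1) :=
    (hv.continuous_fderiv one_ne_zero).clm_apply continuous_const
  have hIBP := integral_smul_fderiv_eq_neg_fderiv_smul_of_integrable
    (μ := (volume : Measure (EuclideanSpace ℝ ι))) (f := φ) (g := v)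
    (v := EuclideanSpace.single j 1)
    ((hφ'.smul hv.continuous).integrable_of_hasCompactSupport
      (hφc.fderiv_apply ℝ _).smul_right)
    ((hφ.continuous.smul hv').integrable_of_hasCompactSupport hφc.smul_right)
    ((hφ.continuous.smul hv.continuous).integrable_of_hasCompactSupport hφc.smul_right)
    (fun x _ => hφ.differentiable one_ne_zero x) (fun x _ => hv.differentiable one_ne_zero x)
  have hφ0 : ∀ x ∉ Ω, x ∉ tsupport φ := fun x hx hxφ => hx (hφΩ hxφ)
  rw [setIntegral_eq_integral_of_forall_compl_eq_zero fun x hx => by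
      rw [fderiv_of_notMem_tsupport ℝ (hφ0 x hx), zero_apply, zero_smul],
    setIntegral_eq_integral_of_forall_compl_eq_zero fun x hx => by
      rw [image_eq_zero_of_notMem_tsupport (hφ0 x hx), zero_smul]]
  simp only [grad_apply, hIBP, neg_neg]

theorem HasWeakGrad.of_tendsto {b : ℕ → EuclideanSpace ℝ ι → F} {B : EuclideanSpace ℝ ι → F}
    {K : EuclideanSpace ℝ ι → PiLp 2 fun _ : ι => F} (hb : ∀ n, ContDiff ℝ 1 (b n))
    (hB : IntegrableOn B Ω) (hK : IntegrableOn K Ω)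
    (hbB : Tendsto (fun n => ∫⁻ x in Ω, ‖b n x - B x‖ₑ) atTop (𝓝 0))
    (hbK : Tendsto (fun n => ∫⁻ x in Ω, ‖grad (b n) x - K x‖ₑ) atTop (𝓝 0)) :
    HasWeakGrad Ω B K := by
  refine ⟨hB, hK, fun φ hφ hφc hφΩ j => ?_⟩
  have hφ₁ : ContDiff ℝ 1 φ := hφ.of_le (by exact_mod_cast le_top)
  have hφ' : Continuous fun x => fderiv ℝ φ x (EuclideanSpace.single j 1) :=
    (hφ₁.continuous_fderiv one_ne_zero).clm_apply continuous_const
  have hφ'c := hφc.fderiv_apply ℝ (EuclideanSpace.single j (1 : ℝ))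
  obtain ⟨M, hM⟩ := hφc.exists_bound_of_continuous hφ.continuous
  obtain ⟨M', hM'⟩ := hφ'c.exists_bound_of_continuous hφ'
  have hproj := (PiLp.proj (𝕜 := ℝ) 2 (fun _ : ι => F) j).continuous
  have hlim := tendsto_integral_smul_of_tendsto_lintegral (μ := volume.restrict Ω)
    hφ'.aestronglyMeasurable hM' (fun n => ((hφ'.smul (hb n).continuous)
      |>.integrable_of_hasCompactSupport hφ'c.smul_right).integrableOn) hB.1 hbB
  have hlim_grad := tendsto_integral_smul_of_tendsto_lintegral (μ := volume.restrict Ω)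
    (g := fun n x => grad (b n) x j) hφ.continuous.aestronglyMeasurable hM
    (fun n => ((hφ.continuous.smul (hproj.comp (continuous_grad (hb n))))
      |>.integrable_of_hasCompactSupport hφc.smul_right).integrableOn)
    (hproj.comp_aestronglyMeasurable hK.1)
    (tendsto_of_tendsto_of_tendsto_of_le_of_le tendsto_const_nhds hbK (fun n => zero_le)
      fun n => lintegral_mono fun x => enorm_le_iff_norm_le.2 <|
        PiLp.norm_apply_le (grad (b n) x - K x) j)
  refine tendsto_nhds_unique hlim (hlim_grad.neg.congr fun n => ?_)
  exact (integral_fderiv_smul_eq_neg_integral_smul_grad (hb n) hφ₁ hφc hφΩ j).symm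

theorem HasWeakGrad.ae_eq_zero_of_const [CompleteSpace F] (hΩ : IsOpen Ω) {c : F}
    {K : EuclideanSpace ℝ ι → PiLp 2 fun _ : ι => F} (h : HasWeakGrad Ω (fun _ => c) K) :
    ∀ᵐ x ∂volume.restrict Ω, K x = 0 := by
  have hcomp : ∀ j, ∀ᵐ x ∂volume.restrict Ω, K x j = 0 := fun j => by
    refine (ae_restrict_iff' hΩ.measurableSet).2 <|
      hΩ.ae_eq_zero_of_integral_contDiff_smul_eq_zero
        (f := fun x => K x j) (IntegrableOn.locallyIntegrableOn <|
          (PiLp.proj (𝕜 := ℝ) 2 (fun _ : ι => F) j).integrable_comp h.integrableOn_grad)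
        fun φ hφ hφc hφΩ => ?_
    rw [← setIntegral_eq_integral_of_forall_compl_eq_zero (s := Ω) fun x hx => by
        rw [image_eq_zero_of_notMem_tsupport fun hxφ => hx (hφΩ hxφ), zero_smul],
      ← neg_eq_zero, ← h.integral_fderiv_smul φ hφ hφc hφΩ j,
      integral_fderiv_smul_eq_neg_integral_smul_grad contDiff_const
        (hφ.of_le (by exact_mod_cast le_top)) hφc hφΩ j]
    simp
  filter_upwards [ae_all_iff.2 hcomp] with x hx
  ext j
  exact hx j

end WeakGradientLimits

section Tangency

theorem enorm_norm_sq_sub_one_le {E : Type*} [NormedAddCommGroup E] {a w : E} (ha : ‖a‖ ≤ 1)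
    (hw : ‖w‖ = 1) : ‖‖a‖ ^ 2 - 1‖ₑ ≤ 2 * ‖a - w‖ₑ := by
  rw [← ofReal_norm, ← ofReal_norm, ← ENNReal.ofReal_ofNat 2, ← ENNReal.ofReal_mul two_pos.le]
  refine ENNReal.ofReal_le_ofReal ?_
  calc ‖‖a‖ ^ 2 - 1‖ = (‖a‖ + 1) * |‖a‖ - ‖w‖| := by
        rw [hw, ← abs_of_nonneg (show 0 ≤ ‖a‖ + 1 by positivity), ← abs_mul, Real.norm_eq_abs]
        ring_nf
    _ ≤ 2 * ‖a - w‖ :=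
        mul_le_mul (by linarith) (abs_norm_sub_norm_le a w) (abs_nonneg _) two_pos.le

theorem continuous_toLp_inner {ι F : Type*} [NormedAddCommGroup F] [InnerProductSpace ℝ F] :
    Continuous fun q : F × PiLp 2 fun _ : ι => F =>
      (WithLp.toLp 2 fun j => inner ℝ q.1 (q.2 j) : EuclideanSpace ℝ ι) :=
  (PiLp.continuous_toLp 2 _).comp <| continuous_pi fun j =>
    continuous_fst.inner ((PiLp.proj (𝕜 := ℝ) 2 (fun _ : ι => F) j).continuous.comp continuous_snd)

variable {ι F : Type*} [NormedAddCommGroup F] [InnerProductSpace ℝ F]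

theorem grad_norm_sq [Finite ι] [DecidableEq ι] {v : EuclideanSpace ℝ ι → F}
    {x : EuclideanSpace ℝ ι} (hv : DifferentiableAt ℝ v x) :
    grad (fun y => ‖v y‖ ^ 2) x =
      (2 : ℝ) • WithLp.toLp 2 fun j => inner ℝ (v x) (grad v x j) := by
  have := Fintype.ofFinite ι
  ext j
  simp [hv.hasFDerivAt.norm_sq.fderiv]

variable [Fintype ι]

theorem norm_toLp_inner_le (w : F) (h : PiLp 2 fun _ : ι => F) :
    ‖(WithLp.toLp 2 fun j => inner ℝ w (h j) : EuclideanSpace ℝ ι)‖ ≤ ‖w‖ * ‖h‖ :=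
  norm_le_mul_norm_of_forall_apply_le (norm_nonneg w) fun j => norm_inner_le_norm w (h j)

theorem enorm_toLp_inner_sub_le {a w : F} (ha : ‖a‖ ≤ 1) (g h : PiLp 2 fun _ : ι => F) :
    ‖(WithLp.toLp 2 fun j => inner ℝ a (g j) : EuclideanSpace ℝ ι) -
        WithLp.toLp 2 fun j => inner ℝ w (h j)‖ₑ ≤ ‖g - h‖ₑ + ‖a - w‖ₑ * ‖h‖ₑ := by
  have hsplit : (WithLp.toLp 2 fun j => inner ℝ a (g j) : EuclideanSpace ℝ ι) -
        WithLp.toLp 2 (fun j => inner ℝ w (h j)) =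
      WithLp.toLp 2 (fun j => inner ℝ a ((g - h) j)) +
        WithLp.toLp 2 (fun j => inner ℝ (a - w) (h j)) := by
    ext j
    simp only [PiLp.sub_apply, PiLp.add_apply, inner_sub_left, inner_sub_right]
    ring
  rw [hsplit]
  refine (enorm_add_le _ _).trans (add_le_add ?_ ?_)
  · exact enorm_le_iff_norm_le.2 <| (norm_toLp_inner_le a (g - h)).trans <|
      mul_le_of_le_one_left (norm_nonneg _) ha
  · rw [← ofReal_norm, ← ofReal_norm, ← ofReal_norm, ← ENNReal.ofReal_mul (norm_nonneg _)]
    exact ENNReal.ofReal_le_ofReal (norm_toLp_inner_le (a - w) h)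

variable [DecidableEq ι] {Ω : Set (EuclideanSpace ℝ ι)} {U : EuclideanSpace ℝ ι → F}
  {H : EuclideanSpace ℝ ι → PiLp 2 fun _ : ι => F} {a : ℕ → EuclideanSpace ℝ ι → F}

theorem IsSmoothApprox.tendsto_norm_sq (h : IsSmoothApprox Ω U H a)
    (hU : ∀ᵐ x ∂volume.restrict Ω, ‖U x‖ = 1) :
    Tendsto (fun n => ∫⁻ x in Ω, ‖‖a n x‖ ^ 2 - 1‖ₑ) atTop (𝓝 0) := by
  have hlim : Tendsto (fun n => 2 * ∫⁻ x in Ω, ‖a n x - U x‖ₑ) atTop (𝓝 0) := by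
    simpa using ENNReal.Tendsto.const_mul h.tendsto (.inr ENNReal.ofNat_ne_top)
  refine tendsto_of_tendsto_of_tendsto_of_le_of_le tendsto_const_nhds hlim (fun n => zero_le)
    fun n => ?_
  rw [← lintegral_const_mul' _ _ ENNReal.ofNat_ne_top]
  exact lintegral_mono_ae <| hU.mono fun x hx => enorm_norm_sq_sub_one_le (h.norm_le_one n x) hx

theorem IsSmoothApprox.tendsto_lintegral_enorm_sub_mul (h : IsSmoothApprox Ω U H a)
    (hU : ∀ᵐ x ∂volume.restrict Ω, ‖U x‖ = 1) (hUm : AEStronglyMeasurable U (volume.restrict Ω))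
    (hae : ∀ᵐ x ∂volume.restrict Ω, Tendsto (fun n => a n x) atTop (𝓝 (U x)))
    {D : EuclideanSpace ℝ ι → ℝ≥0∞} (hD : AEMeasurable D (volume.restrict Ω))
    (hD' : ∫⁻ x in Ω, D x ≠ ⊤) :
    Tendsto (fun n => ∫⁻ x in Ω, ‖a n x - U x‖ₑ * D x) atTop (𝓝 0) := by
  refine tendsto_lintegral_mul_of_tendsto_zero (ENNReal.ofNat_ne_top (n := 2))
    (fun n => ((h.contDiff n).continuous.aestronglyMeasurable.sub hUm).enorm)
    (fun n => hU.mono fun x hx => ?_) (hae.mono fun x hx => ?_) hD hD'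
  · rw [← ofReal_norm, ← ENNReal.ofReal_ofNat 2]
    refine ENNReal.ofReal_le_ofReal ((norm_sub_le _ _).trans ?_)
    linarith [h.norm_le_one n x]
  · simpa using (hx.sub_const (U x)).enorm

theorem IsSmoothApprox.tendsto_grad_norm_sq (h : IsSmoothApprox Ω U H a)
    (hU : ∀ᵐ x ∂volume.restrict Ω, ‖U x‖ = 1) (hUm : AEStronglyMeasurable U (volume.restrict Ω))
    (hH : IntegrableOn H Ω)
    (hae : ∀ᵐ x ∂volume.restrict Ω, Tendsto (fun n => a n x) atTop (𝓝 (U x))) :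
    Tendsto (fun n => ∫⁻ x in Ω, ‖grad (fun y => ‖a n y‖ ^ 2) x -
      (2 : ℝ) • WithLp.toLp 2 fun j => inner ℝ (U x) (H x j)‖ₑ) atTop (𝓝 0) := by
  have hlim : Tendsto (fun n => 2 * ((∫⁻ x in Ω, ‖grad (a n) x - H x‖ₑ) +
      ∫⁻ x in Ω, ‖a n x - U x‖ₑ * ‖H x‖ₑ)) atTop (𝓝 0) := by
    simpa using ENNReal.Tendsto.const_mul
      (h.tendsto_grad.add
        (h.tendsto_lintegral_enorm_sub_mul hU hUm hae hH.1.enorm hH.2.ne))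
      (.inr ENNReal.ofNat_ne_top)
  refine tendsto_of_tendsto_of_tendsto_of_le_of_le tendsto_const_nhds hlim (fun n => zero_le)
    fun n => ?_
  have ha : ContDiff ℝ 1 (a n) := (h.contDiff n).of_le (by exact_mod_cast le_top)
  have hmeas : AEMeasurable (fun x => ‖grad (a n) x - H x‖ₑ) (volume.restrict Ω) :=
    ((continuous_grad ha).aestronglyMeasurable.sub hH.1).enorm
  rw [← lintegral_add_left' hmeas, ← lintegral_const_mul' _ _ ENNReal.ofNat_ne_top]
  refine lintegral_mono fun x => ?_
  rw [grad_norm_sq (ha.differentiable one_ne_zero x), ← smul_sub, enorm_smul,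
    ← ofReal_norm (2 : ℝ), Real.norm_ofNat, ENNReal.ofReal_ofNat]
  gcongr
  exact enorm_toLp_inner_sub_le (h.norm_le_one n x) _ _

theorem IsSmoothApprox.inner_eq_zero_ae [CompleteSpace F] (h : IsSmoothApprox Ω U H a)
    (hΩ : IsOpen Ω) (hU : ∀ᵐ x ∂volume.restrict Ω, ‖U x‖ = 1) (hUi : IntegrableOn U Ω)
    (hH : IntegrableOn H Ω)
    (hae : ∀ᵐ x ∂volume.restrict Ω, Tendsto (fun n => a n x) atTop (𝓝 (U x))) :
    ∀ᵐ x ∂volume.restrict Ω, ∀ j, inner ℝ (U x) (H x j) = 0 := by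
  have hone : IntegrableOn (fun _ => (1 : ℝ)) Ω := hUi.norm.congr hU
  have hK : IntegrableOn (fun x =>
      (WithLp.toLp 2 fun j => inner ℝ (U x) (H x j) : EuclideanSpace ℝ ι)) Ω :=
    Integrable.mono hH (continuous_toLp_inner.comp_aestronglyMeasurable (hUi.1.prodMk hH.1)) <|
      hU.mono fun x hx => by simpa [hx] using norm_toLp_inner_le (U x) (H x)
  have hweak : HasWeakGrad Ω (fun _ => (1 : ℝ)) fun x => (2 : ℝ) •
      WithLp.toLp 2 fun j => inner ℝ (U x) (H x j) :=
    .of_tendsto (fun n => ((h.contDiff n).of_le (by exact_mod_cast le_top)).norm_sq ℝ) hone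
      (hK.smul (2 : ℝ))
      (h.tendsto_norm_sq hU) (h.tendsto_grad_norm_sq hU hUi.1 hH hae)
  filter_upwards [hweak.ae_eq_zero_of_const hΩ] with x hx j
  simpa using congr($hx j)

end Tangency

section Averaging

theorem lintegral_lintegral_mul_le {X Y : Type*} [MeasurableSpace X] [MeasurableSpace Y]
    {μ : Measure X} [SFinite μ] {ν : Measure Y} [SFinite ν] {k : X → Y → ℝ≥0∞}
    (hk : AEMeasurable (Function.uncurry k) (μ.prod ν)) {K : ℝ≥0∞}
    (hK : ∀ᵐ x ∂μ, ∫⁻ y, k x y ∂ν ≤ K) {D : X → ℝ≥0∞} (hD : AEMeasurable D μ) :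
    ∫⁻ y, ∫⁻ x, k x y * D x ∂μ ∂ν ≤ K * ∫⁻ x, D x ∂μ := by
  have hkD : AEMeasurable (Function.uncurry fun x y => k x y * D x) (μ.prod ν) :=
    hk.mul hD.comp_fst
  rw [← lintegral_lintegral_swap hkD, ← lintegral_const_mul'' _ hD]
  refine lintegral_mono_ae ?_
  filter_upwards [hk.aestronglyMeasurable.prodMk_left, hK] with x hkx hKx
  have hkx' : AEMeasurable (k x) ν := hkx.aemeasurable
  rw [lintegral_mul_const'' _ hkx']
  exact mul_le_mul_left hKx _

variable {F : Type*} [NormedAddCommGroup F] [MeasurableSpace F] [BorelSpace F]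

theorem setLIntegral_inv_norm_sub_le (μ : Measure F) [μ.IsAddLeftInvariant] [μ.IsNegInvariant]
    (s : Set F) (z : F) :
    ∫⁻ y in s, ENNReal.ofReal ‖z - y‖⁻¹ ∂μ ≤
      (∫⁻ y in ball 0 1, ENNReal.ofReal ‖y‖⁻¹ ∂μ) + μ s := by
  let f : F → ℝ≥0∞ := (ball 0 1).indicator fun y => ENNReal.ofReal ‖y‖⁻¹
  have hle : ∀ y, ENNReal.ofReal ‖y‖⁻¹ ≤ f y + 1 := fun y => by
    by_cases hy : y ∈ ball (0 : F) 1
    · simp only [f, indicator_of_mem hy, le_self_add]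
    · rw [mem_ball_zero_iff, not_lt] at hy
      exact le_add_left (ENNReal.ofReal_le_one.2 (inv_le_one_of_one_le₀ hy))
  calc ∫⁻ y in s, ENNReal.ofReal ‖z - y‖⁻¹ ∂μ
      ≤ ∫⁻ y in s, f (z - y) + 1 ∂μ := lintegral_mono fun y => hle (z - y)
    _ = (∫⁻ y in s, f (z - y) ∂μ) + μ s := by
        rw [lintegral_add_right _ measurable_const, setLIntegral_one]
    _ ≤ (∫⁻ y, f (z - y) ∂μ) + μ s := by
        gcongr ?_ + _
        exact setLIntegral_le_lintegral s fun y => f (z - y)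
    _ = (∫⁻ y in ball 0 1, ENNReal.ofReal ‖y‖⁻¹ ∂μ) + μ s := by
        rw [lintegral_sub_left_eq_self f z, lintegral_indicator measurableSet_ball]

variable [NormedSpace ℝ F] [FiniteDimensional ℝ F]

theorem integrableOn_inv_norm_ball (hF : 1 < Module.finrank ℝ F) (μ : Measure F)
    [μ.IsAddHaarMeasure] (r : ℝ) : IntegrableOn (fun y : F => ‖y‖⁻¹) (ball 0 r) μ := by
  have : Nontrivial F := Module.nontrivial_of_finrank_pos (zero_lt_one.trans hF)
  rw [integrableOn_fun_norm_addHaar μ (f := fun t : ℝ => t⁻¹)]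
  have hpow : IntegrableOn (fun t : ℝ => t ^ (Module.finrank ℝ F - 2)) (Ioo 0 r) :=
    (continuous_pow _).continuousOn.integrableOn_Icc.mono_set Ioo_subset_Icc_self
  refine hpow.congr_fun (fun t ht => ?_) measurableSet_Ioo
  rw [smul_eq_mul, show Module.finrank ℝ F - 1 = Module.finrank ℝ F - 2 + 1 by lia, pow_succ,
    mul_inv_cancel_right₀ ht.1.ne']

theorem exists_lintegral_inv_norm_sub_mul_le (hF : 1 < Module.finrank ℝ F) {X : Type*}
    [MeasurableSpace X] {μ : Measure X} [SFinite μ] (ν : Measure F) [ν.IsAddHaarMeasure]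
    {η : ℝ} (hη : 0 < η) :
    ∃ K : ℝ≥0∞, K ≠ ⊤ ∧ ∀ a : X → F, Measurable a → ∀ D : X → ℝ≥0∞, AEMeasurable D μ →
      ∀ N : Set F, ν N = 0 → ∃ y ∉ N, ‖y‖ < η ∧
        ∫⁻ x, (ENNReal.ofReal ‖a x - y‖⁻¹ + 2) * D x ∂μ ≤ K * ∫⁻ x, D x ∂μ := by
  have hν₀ : ν (ball 0 η) ≠ 0 := (measure_ball_pos ν 0 hη).ne'
  have hν : ν (ball 0 η) ≠ ⊤ := measure_ball_lt_top.ne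
  have : IsProbabilityMeasure (ProbabilityTheory.cond ν (ball 0 η)) :=
    ProbabilityTheory.cond_isProbabilityMeasure_of_finite hν₀ hν
  let I := ∫⁻ y in ball 0 1, ENNReal.ofReal ‖y‖⁻¹ ∂ν
  have hI : I ≠ ⊤ := (integrableOn_inv_norm_ball hF ν 1).lintegral_lt_top.ne
  refine ⟨(ν (ball 0 η))⁻¹ * (I + ν (ball 0 η)) + 2, ?_, fun a ha D hD N hN => ?_⟩
  · finiteness
  have hnull : ProbabilityTheory.cond ν (ball 0 η) (N ∪ (ball 0 η)ᶜ) = 0 :=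
    measure_union_null (ProbabilityTheory.cond_absolutelyContinuous hN)
      (ProbabilityTheory.ae_cond_mem measurableSet_ball)
  have hK : ∀ x, ∫⁻ y, (ENNReal.ofReal ‖a x - y‖⁻¹ + 2) ∂ProbabilityTheory.cond ν (ball 0 η) ≤
      (ν (ball 0 η))⁻¹ * (I + ν (ball 0 η)) + 2 := fun x => by
    rw [lintegral_add_right _ measurable_const, lintegral_const, measure_univ, mul_one,
      ProbabilityTheory.cond, lintegral_smul_measure, smul_eq_mul]
    gcongr
    exact setLIntegral_inv_norm_sub_le ν _ _
  have hk : Measurable fun q : X × F => ENNReal.ofReal ‖a q.1 - q.2‖⁻¹ + 2 := by fun_prop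
  obtain ⟨y, hy, hle⟩ := exists_notMem_null_le_lintegral
    (hk.aemeasurable.mul hD.comp_fst).prod_swap.lintegral_prod_right' hnull
  simp only [mem_union, mem_compl_iff, not_or, not_not, mem_ball_zero_iff] at hy
  exact ⟨y, hy.1, hy.2, hle.trans <|
    lintegral_lintegral_mul_le hk.aemeasurable (Eventually.of_forall hK) hD⟩

end Averaging

section Sard

theorem finite_inter_preimage_of_forall_injective_fderiv {E F : Type*} [NormedAddCommGroup E]
    [NormedSpace ℝ E] [FiniteDimensional ℝ E] [NormedAddCommGroup F] [NormedSpace ℝ F]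
    {a : E → F} (ha : Differentiable ℝ a) {y : F}
    (hy : ∀ x, a x = y → Function.Injective (fderiv ℝ a x)) {K : Set E}
    (hK : IsCompact K) : (K ∩ a ⁻¹' {y}).Finite := by
  by_contra hinf
  obtain ⟨x, -, hx⟩ := Set.Infinite.exists_accPt_of_subset_isCompact hinf hK inter_subset_left
  have hx' : AccPt x (𝓟 (a ⁻¹' {y})) := hx.mono (principal_mono.2 inter_subset_right)
  have hax : x ∈ a ⁻¹' {y} :=
    (isClosed_singleton.preimage ha.continuous).closure_subset hx'.clusterPt.mem_closure
  obtain ⟨c, -, hc⟩ :=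
    (fderiv ℝ a x).toLinearMap.exists_antilipschitzWith (LinearMap.ker_eq_bot.2 (hy x hax))
  rw [accPt_iff_frequently_nhdsNE] at hx'
  exact hx' ((ha x).hasFDerivAt.eventually_ne ⟨c, hc⟩)

theorem measure_image_not_injective_fderiv_eq_zero {E F : Type*} [NormedAddCommGroup E]
    [NormedSpace ℝ E] [FiniteDimensional ℝ E] [NormedAddCommGroup F] [NormedSpace ℝ F]
    [FiniteDimensional ℝ F] [MeasurableSpace F] [BorelSpace F] (ν : Measure F)
    [ν.IsAddHaarMeasure] (hEF : Module.finrank ℝ E = Module.finrank ℝ F) {a : E → F}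
    (ha : Differentiable ℝ a) :
    ν (a '' {x | ¬ Function.Injective (fderiv ℝ a x)}) = 0 := by
  let e : F ≃L[ℝ] E := ContinuousLinearEquiv.ofFinrankEq hEF.symm
  have himage : a '' {x | ¬ Function.Injective (fderiv ℝ a x)} =
      (a ∘ e) '' (e ⁻¹' {x | ¬ Function.Injective (fderiv ℝ a x)}) := by
    rw [image_comp, e.surjective.image_preimage]
  rw [himage]
  refine addHaar_image_eq_zero_of_det_fderivWithin_eq_zero ν
    (f' := fun y => fderiv ℝ a (e y) ∘L (e : F →L[ℝ] E))
    (fun y _ => ((ha (e y)).hasFDerivAt.comp y e.hasFDerivAt).hasFDerivWithinAt) fun y hy => ?_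
  by_contra hdet
  exact hy <| .of_comp_right
    (ContinuousLinearMap.toContinuousLinearEquivOfDetNeZero _ hdet).injective e.surjective

end Sard

section RadialProjection

theorem inv_norm_sub_add_two_mul_norm_sub_le {F : Type*} [NormedAddCommGroup F] {a y U : F}
    (hU : ‖U‖ = 1) {η : ℝ} (hη : η ≤ 1 / 4) (hy : ‖y‖ ≤ η) :
    (‖a - y‖⁻¹ + 2) * ‖a - y - U‖ ≤ (‖a - y‖⁻¹ + 2) * (2 * ‖a - U‖) + 6 * η := by
  have hη₀ : 0 ≤ η := (norm_nonneg y).trans hy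
  have hsub : ‖a - y - U‖ ≤ ‖a - U‖ + η := by
    rw [sub_right_comm]
    exact (norm_sub_le _ _).trans (by gcongr)
  suffices (‖a - y‖⁻¹ + 2) * η ≤ (‖a - y‖⁻¹ + 2) * ‖a - U‖ + 6 * η by
    have := mul_le_mul_of_nonneg_left hsub (show 0 ≤ ‖a - y‖⁻¹ + 2 by positivity)
    linarith
  rcases le_total (1 / 2) ‖a‖ with ha | ha
  · have hinv : ‖a - y‖⁻¹ ≤ 4 :=
      inv_le_of_inv_le₀ four_pos (by linarith [norm_sub_norm_le a y])
    have : 0 ≤ (‖a - y‖⁻¹ + 2) * ‖a - U‖ := by positivity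
    nlinarith
  · have : η ≤ ‖a - U‖ := by linarith [norm_sub_norm_le U a, norm_sub_rev a U]
    have : (‖a - y‖⁻¹ + 2) * η ≤ (‖a - y‖⁻¹ + 2) * ‖a - U‖ := by gcongr
    linarith

variable {F : Type*} [NormedAddCommGroup F] [InnerProductSpace ℝ F]

theorem starProjection_orthogonal_span_singleton (q h : F) :
    (ℝ ∙ q)ᗮ.starProjection h =
      h - inner ℝ (NormedSpace.normalize q) h • NormedSpace.normalize q := by
  rw [Submodule.starProjection_orthogonal_val, Submodule.starProjection_singleton,
    NormedSpace.normalize, real_inner_smul_left, smul_smul]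
  congr 2
  simp only [RCLike.ofReal_real_eq_id, id_eq]
  ring

theorem hasFDerivAt_norm_of_ne_zero {q : F} (hq : q ≠ 0) :
    HasFDerivAt (fun y : F => ‖y‖) (innerSL ℝ (NormedSpace.normalize q)) q := by
  have hsq := (hasFDerivAt_id q).norm_sq.sqrt (pow_ne_zero 2 (norm_ne_zero_iff.2 hq))
  simp only [id_eq, Real.sqrt_sq (norm_nonneg _)] at hsq
  refine hsq.congr_fderiv ?_
  ext h
  simp only [one_div, mul_inv_rev, ContinuousLinearMap.comp_id, smul_apply, coe_innerSL_apply,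
    nsmul_eq_mul, Nat.cast_ofNat, smul_eq_mul, NormedSpace.normalize, map_smul]
  ring

theorem hasFDerivAt_normalize {q : F} (hq : q ≠ 0) :
    HasFDerivAt NormedSpace.normalize (‖q‖⁻¹ • (ℝ ∙ q)ᗮ.starProjection) q := by
  have hq' : ‖q‖ ≠ 0 := norm_ne_zero_iff.2 hq
  refine (((hasDerivAt_inv hq').comp_hasFDerivAt q (hasFDerivAt_norm_of_ne_zero hq)).smul
    (hasFDerivAt_id q)).congr_fderiv ?_
  ext h
  rw [smul_apply, starProjection_orthogonal_span_singleton]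
  simp only [Function.comp_apply, NormedSpace.normalize, map_smul, smul_smul, neg_mul, neg_smul,
    id_eq, add_apply, smul_apply, ContinuousLinearMap.id_apply,
    ContinuousLinearMap.smulRight_apply, neg_apply, coe_innerSL_apply, smul_eq_mul,
    real_inner_smul_left, smul_sub]
  module

theorem norm_normalize_sub_le {q U : F} (hU : ‖U‖ = 1) :
    ‖NormedSpace.normalize q - U‖ ≤ 2 * ‖q - U‖ := by
  rcases eq_or_ne q 0 with rfl | hq
  · simp [hU]
  have hself : ‖NormedSpace.normalize q - q‖ = |‖U‖ - ‖q‖| := by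
    have hsmul : NormedSpace.normalize q - q = (1 - ‖q‖) • NormedSpace.normalize q := by
      rw [sub_smul, one_smul, NormedSpace.norm_smul_normalize]
    rw [hsmul, norm_smul, NormedSpace.norm_normalize hq, mul_one, hU, Real.norm_eq_abs]
  calc ‖NormedSpace.normalize q - U‖
      ≤ ‖NormedSpace.normalize q - q‖ + ‖q - U‖ := norm_sub_le_norm_sub_add_norm_sub _ _ _
    _ ≤ ‖q - U‖ + ‖q - U‖ := by
        rw [hself, norm_sub_rev q U]
        gcongr
        exact abs_norm_sub_norm_le U q
    _ = 2 * ‖q - U‖ := (two_mul _).symm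

theorem norm_inv_smul_starProjection_orthogonal_le (q h : F) :
    ‖‖q‖⁻¹ • (ℝ ∙ q)ᗮ.starProjection h‖ ≤ ‖q‖⁻¹ * ‖h‖ := by
  rw [norm_smul, norm_inv, norm_norm]
  gcongr
  exact Submodule.norm_starProjection_apply_le _ h

theorem norm_inv_smul_starProjection_orthogonal_sub_le {q U h : F} (hq : q ≠ 0) (hU : ‖U‖ = 1)
    (hh : inner ℝ U h = 0) :
    ‖‖q‖⁻¹ • (ℝ ∙ q)ᗮ.starProjection h - h‖ ≤ (‖q‖⁻¹ + 2) * ‖q - U‖ * ‖h‖ := by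
  have hq' : ‖q‖ ≠ 0 := norm_ne_zero_iff.2 hq
  set σ := NormedSpace.normalize q with hσ
  have hσ₁ : ‖σ‖ = 1 := NormedSpace.norm_normalize hq
  have hsplit : ‖q‖⁻¹ • (ℝ ∙ q)ᗮ.starProjection h - h =
      (‖q‖⁻¹ * (‖U‖ - ‖q‖)) • (ℝ ∙ q)ᗮ.starProjection h - inner ℝ (σ - U) h • σ := by
    rw [inner_sub_left, hh, sub_zero, mul_sub, inv_mul_cancel₀ hq', hU, mul_one, sub_smul,
      starProjection_orthogonal_span_singleton, ← hσ, one_smul]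
    abel
  have hinner : ‖inner ℝ (σ - U) h • σ‖ ≤ 2 * ‖q - U‖ * ‖h‖ := by
    rw [norm_smul, hσ₁, mul_one]
    exact (norm_inner_le_norm _ _).trans <| by gcongr; exact norm_normalize_sub_le hU
  have hscale : ‖(‖q‖⁻¹ * (‖U‖ - ‖q‖)) • (ℝ ∙ q)ᗮ.starProjection h‖ ≤ ‖q‖⁻¹ * ‖q - U‖ * ‖h‖ := by
    rw [norm_smul, norm_mul, norm_inv, norm_norm, norm_sub_rev q U]
    gcongr
    · exact abs_norm_sub_norm_le U q
    · exact Submodule.norm_starProjection_apply_le _ h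
  rw [hsplit]
  linarith [norm_sub_le ((‖q‖⁻¹ * (‖U‖ - ‖q‖)) • (ℝ ∙ q)ᗮ.starProjection h)
    (inner ℝ (σ - U) h • σ)]

variable {ι : Type*} [Fintype ι] [DecidableEq ι]

theorem norm_grad_normalize_sub_le {q : EuclideanSpace ℝ ι → F} {x : EuclideanSpace ℝ ι}
    (hq : DifferentiableAt ℝ q x) (hqx : q x ≠ 0) {U : F} (hU : ‖U‖ = 1)
    {H : PiLp 2 fun _ : ι => F} (hH : ∀ j, inner ℝ U (H j) = 0) :
    ‖grad (fun y => NormedSpace.normalize (q y)) x - H‖ ≤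
      ‖q x‖⁻¹ * ‖grad q x - H‖ + (‖q x‖⁻¹ + 2) * ‖q x - U‖ * ‖H‖ := by
  let L : F →L[ℝ] F := ‖q x‖⁻¹ • (ℝ ∙ q x)ᗮ.starProjection
  have hsplit : grad (fun y => NormedSpace.normalize (q y)) x - H =
      (WithLp.toLp 2 fun j => L ((grad q x - H) j)) + WithLp.toLp 2 fun j => L (H j) - H j := by
    ext j
    have := ((hasFDerivAt_normalize hqx).comp x hq.hasFDerivAt).fderiv
    simp only [Function.comp_def] at this
    simp only [grad_apply, PiLp.sub_apply, PiLp.add_apply, this, L, map_sub,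
      ContinuousLinearMap.comp_apply]
    abel
  rw [hsplit]
  refine (norm_add_le _ _).trans (add_le_add ?_ ?_)
  · exact norm_le_mul_norm_of_forall_apply_le (by positivity) fun j =>
      norm_inv_smul_starProjection_orthogonal_le (q x) ((grad q x - H) j)
  · exact norm_le_mul_norm_of_forall_apply_le (by positivity) fun j =>
      norm_inv_smul_starProjection_orthogonal_sub_le hqx hU (hH j)

end RadialProjection

section SphereProjection

/-- The pointwise error bound for the radial projection of `a` from the point `y` with `‖y‖ ≤ η`:
here `g` is the gradient of `a`, and `U`, `H` are the value and the gradient of the limit map. -/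
def projError {F V : Type*} [NormedAddCommGroup F] [NormedAddCommGroup V] (η : ℝ) (y a U : F)
    (g H : V) : ℝ :=
  (‖a - y‖⁻¹ + 2) * (‖g - H‖ + 2 * ‖a - U‖ * ‖H‖) + 6 * η * ‖H‖

theorem ofReal_projError {F V : Type*} [NormedAddCommGroup F] [NormedAddCommGroup V] {η : ℝ}
    (hη : 0 ≤ η) (y a U : F) (g H : V) :
    ENNReal.ofReal (projError η y a U g H) =
      (ENNReal.ofReal ‖a - y‖⁻¹ + 2) * (‖g - H‖ₑ + 2 * (‖a - U‖ₑ * ‖H‖ₑ)) +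
        ENNReal.ofReal (6 * η) * ‖H‖ₑ := by
  simp only [← ofReal_norm, projError]
  rw [ENNReal.ofReal_add (by positivity) (by positivity), ENNReal.ofReal_mul (by positivity),
    ENNReal.ofReal_mul (p := 6 * η) (by positivity), ENNReal.ofReal_add (by positivity) two_pos.le,
    ENNReal.ofReal_add (by positivity) (by positivity), mul_assoc 2,
    ENNReal.ofReal_mul two_pos.le, ENNReal.ofReal_mul (norm_nonneg _), ENNReal.ofReal_ofNat]

variable {ι F : Type*} [Fintype ι] [DecidableEq ι] [NormedAddCommGroup F] [InnerProductSpace ℝ F]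

section Pointwise

variable {a : EuclideanSpace ℝ ι → F} {x : EuclideanSpace ℝ ι} {y U : F}
  {H : PiLp 2 fun _ : ι => F} {η : ℝ}

theorem norm_grad_normalize_sub_le_projError (ha : DifferentiableAt ℝ a x) (hax : a x ≠ y)
    (hU : ‖U‖ = 1) (hH : ∀ j, inner ℝ U (H j) = 0) (hη : η ≤ 1 / 4) (hy : ‖y‖ ≤ η) :
    ‖grad (fun z => NormedSpace.normalize (a z - y)) x - H‖ ≤
      projError η y (a x) U (grad a x) H := by
  have hgrad : grad (fun z => a z - y) x = grad a x := by
    ext j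
    simp only [grad_apply, fderiv_sub_const]
  have hle := norm_grad_normalize_sub_le (ha.sub_const y) (sub_ne_zero.2 hax) hU hH
  have hy' := mul_le_mul_of_nonneg_right (inv_norm_sub_add_two_mul_norm_sub_le (a := a x) hU hη hy)
    (norm_nonneg H)
  rw [hgrad] at hle
  have := norm_nonneg (grad a x - H)
  unfold projError
  linarith

theorem norm_sub_normalize_mul_norm_grad_le_projError (ha : DifferentiableAt ℝ a x)
    (hax : a x ≠ y) (hU : ‖U‖ = 1) (hH : ∀ j, inner ℝ U (H j) = 0) (hη : η ≤ 1 / 4)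
    (hy : ‖y‖ ≤ η) :
    ‖U - NormedSpace.normalize (a x - y)‖ *
        ‖grad (fun z => NormedSpace.normalize (a z - y)) x‖ ≤
      3 * projError η y (a x) U (grad a x) H := by
  have hη₀ : 0 ≤ η := (norm_nonneg y).trans hy
  set p := fun z => NormedSpace.normalize (a z - y)
  have hgrad := norm_grad_normalize_sub_le_projError ha hax hU hH hη hy
  have htwo : ‖U - p x‖ ≤ 2 := (norm_sub_le _ _).trans <| by
    rw [hU, NormedSpace.norm_normalize (sub_ne_zero.2 hax)]
    norm_num
  have hclose : ‖U - p x‖ ≤ 2 * (‖a x - U‖ + η) := by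
    rw [norm_sub_rev]
    refine (norm_normalize_sub_le hU).trans ?_
    rw [sub_right_comm]
    gcongr
    exact (norm_sub_le _ _).trans (by gcongr)
  have hsmall : 2 * (‖a x - U‖ + η) * ‖H‖ ≤ projError η y (a x) U (grad a x) H := by
    have hone : 1 ≤ ‖a x - y‖⁻¹ + 2 := by linarith [inv_nonneg.2 (norm_nonneg (a x - y))]
    have := le_mul_of_one_le_left
      (show 0 ≤ ‖grad a x - H‖ + 2 * ‖a x - U‖ * ‖H‖ by positivity) hone
    have := mul_nonneg hη₀ (norm_nonneg H)
    have := norm_nonneg (grad a x - H)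
    unfold projError
    linarith
  calc ‖U - p x‖ * ‖grad p x‖
      ≤ ‖U - p x‖ * (‖grad p x - H‖ + ‖H‖) := by
        gcongr
        exact norm_le_norm_sub_add _ _
    _ = ‖U - p x‖ * ‖grad p x - H‖ + ‖U - p x‖ * ‖H‖ := mul_add _ _ _
    _ ≤ 2 * projError η y (a x) U (grad a x) H + 2 * (‖a x - U‖ + η) * ‖H‖ := by gcongr
    _ ≤ 3 * projError η y (a x) U (grad a x) H := by linarith

end Pointwise

variable {Ω : Set (EuclideanSpace ℝ ι)} {U : EuclideanSpace ℝ ι → F}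
  {H : EuclideanSpace ℝ ι → PiLp 2 fun _ : ι => F} {a : ℕ → EuclideanSpace ℝ ι → F}

theorem lintegral_enorm_grad_normalize_sub_le {a : EuclideanSpace ℝ ι → F} {y : F} {η : ℝ}
    (ha : Differentiable ℝ a) (hay : ∀ᵐ x ∂volume.restrict Ω, a x ≠ y)
    (hU : ∀ᵐ x ∂volume.restrict Ω, ‖U x‖ = 1)
    (htan : ∀ᵐ x ∂volume.restrict Ω, ∀ j, inner ℝ (U x) (H x j) = 0) (hη : η ≤ 1 / 4)
    (hy : ‖y‖ ≤ η) :
    ∫⁻ x in Ω, ‖grad (fun z => NormedSpace.normalize (a z - y)) x - H x‖ₑ ≤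
      ∫⁻ x in Ω, ENNReal.ofReal (projError η y (a x) (U x) (grad a x) (H x)) := by
  refine lintegral_mono_ae ?_
  filter_upwards [hay, hU, htan] with x hx hUx hHx
  rw [← ofReal_norm]
  exact ENNReal.ofReal_le_ofReal (norm_grad_normalize_sub_le_projError (ha x) hx hUx hHx hη hy)

theorem lintegral_enorm_sub_normalize_mul_grad_le {a : EuclideanSpace ℝ ι → F} {y : F} {η : ℝ}
    (ha : Differentiable ℝ a) (hay : ∀ᵐ x ∂volume.restrict Ω, a x ≠ y)
    (hU : ∀ᵐ x ∂volume.restrict Ω, ‖U x‖ = 1)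
    (htan : ∀ᵐ x ∂volume.restrict Ω, ∀ j, inner ℝ (U x) (H x j) = 0) (hη : η ≤ 1 / 4)
    (hy : ‖y‖ ≤ η) :
    ∫⁻ x in Ω, ‖U x - NormedSpace.normalize (a x - y)‖ₑ *
        ‖grad (fun z => NormedSpace.normalize (a z - y)) x‖ₑ ≤
      3 * ∫⁻ x in Ω, ENNReal.ofReal (projError η y (a x) (U x) (grad a x) (H x)) := by
  rw [← lintegral_const_mul' _ _ ENNReal.ofNat_ne_top]
  refine lintegral_mono_ae ?_
  filter_upwards [hay, hU, htan] with x hx hUx hHx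
  rw [← ofReal_norm (U x - _), ← ofReal_norm (grad _ x), ← ENNReal.ofReal_mul (norm_nonneg _),
    ← ENNReal.ofReal_ofNat 3, ← ENNReal.ofReal_mul (by norm_num)]
  exact ENNReal.ofReal_le_ofReal
    (norm_sub_normalize_mul_norm_grad_le_projError (ha x) hx hUx hHx hη hy)

theorem IsSmoothApprox.exists_lintegral_projError_le [FiniteDimensional ℝ F] [MeasurableSpace F]
    [BorelSpace F] (h : IsSmoothApprox Ω U H a) (hF : 1 < Module.finrank ℝ F)
    (hU : ∀ᵐ x ∂volume.restrict Ω, ‖U x‖ = 1) (hUm : AEStronglyMeasurable U (volume.restrict Ω))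
    (hH : IntegrableOn H Ω)
    (hae : ∀ᵐ x ∂volume.restrict Ω, Tendsto (fun n => a n x) atTop (𝓝 (U x)))
    {N : ℕ → Set F} (hN : ∀ n, volume (N n) = 0) {ε : ℝ≥0∞} (hε : ε ≠ 0) :
    ∃ n, ∃ η ≤ 1 / 4, ∃ y ∉ N n, ‖y‖ ≤ η ∧
      ∫⁻ x in Ω, ENNReal.ofReal (projError η y (a n x) (U x) (grad (a n) x) (H x)) ≤ ε := by
  have hη_lim : Tendsto (fun η : ℝ => ENNReal.ofReal (6 * η) * ∫⁻ x in Ω, ‖H x‖ₑ)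
      (𝓝[>] 0) (𝓝 0) := by
    have : Tendsto (fun η : ℝ => ENNReal.ofReal (6 * η)) (𝓝 0) (𝓝 0) := by
      have := (ENNReal.continuous_ofReal.comp (continuous_const_mul (6 : ℝ))).tendsto 0
      simpa only [Function.comp_def, mul_zero, ENNReal.ofReal_zero] using this
    simpa using ENNReal.Tendsto.mul_const (this.mono_left nhdsWithin_le_nhds) (.inr hH.2.ne)
  have hε₂ : 0 < ε / 2 := ENNReal.half_pos hε
  have hη_small : ∀ᶠ η : ℝ in 𝓝[>] 0, η ≤ 1 / 4 :=
    nhdsWithin_le_nhds <| Iic_mem_nhds (by norm_num)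
  obtain ⟨η, hηε, hη, hη₀⟩ :=
    ((hη_lim.eventually_le_const hε₂).and <| hη_small.and self_mem_nhdsWithin).exists
  obtain ⟨K, hK, hsel⟩ :=
    exists_lintegral_inv_norm_sub_mul_le hF volume (μ := volume.restrict Ω) hη₀
  let D : ℕ → EuclideanSpace ℝ ι → ℝ≥0∞ := fun n x =>
    ‖grad (a n) x - H x‖ₑ + 2 * (‖a n x - U x‖ₑ * ‖H x‖ₑ)
  have hgrad : ∀ n, AEMeasurable (fun x => ‖grad (a n) x - H x‖ₑ) (volume.restrict Ω) := fun n =>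
    ((continuous_grad ((h.contDiff n).of_le (by exact_mod_cast le_top))).aestronglyMeasurable.sub
      hH.1).enorm
  have hDm : ∀ n, AEMeasurable (D n) (volume.restrict Ω) := fun n => (hgrad n).add <|
    ((((h.contDiff n).continuous.aestronglyMeasurable.sub hUm).enorm).mul hH.1.enorm).const_mul 2
  have hD : Tendsto (fun n => K * ∫⁻ x in Ω, D n x) atTop (𝓝 0) := by
    simp only [D, lintegral_add_left' (hgrad _), lintegral_const_mul' _ _ ENNReal.ofNat_ne_top]
    have := ENNReal.Tendsto.const_mul (a := 2)
      (h.tendsto_lintegral_enorm_sub_mul hU hUm hae hH.1.enorm hH.2.ne) (.inr ENNReal.ofNat_ne_top)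
    simpa using ENNReal.Tendsto.const_mul (h.tendsto_grad.add this) (.inr hK)
  obtain ⟨n, hn⟩ := (hD.eventually_le_const hε₂).exists
  obtain ⟨y, hyN, hyη, hyD⟩ :=
    hsel (a n) (h.contDiff n).continuous.measurable (D n) (hDm n) _ (hN n)
  refine ⟨n, η, hη, y, hyN, hyη.le, ?_⟩
  simp only [ofReal_projError (mem_Ioi.1 hη₀).le]
  rw [lintegral_add_right' _ (hH.1.enorm.const_mul _), lintegral_const_mul'' _ hH.1.enorm,
    ← ENNReal.add_halves ε]
  exact add_le_add (hyD.trans hn) hηε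

theorem IsSmoothApprox.exists_unit_approx [FiniteDimensional ℝ F] (h : IsSmoothApprox Ω U H a)
    (hF : 1 < Module.finrank ℝ F) (hι : Fintype.card ι = Module.finrank ℝ F)
    (hΩ : MeasurableSet Ω) (hΩb : Bornology.IsBounded Ω)
    (hU : ∀ᵐ x ∂volume.restrict Ω, ‖U x‖ = 1) (hUm : AEStronglyMeasurable U (volume.restrict Ω))
    (hH : IntegrableOn H Ω)
    (hae : ∀ᵐ x ∂volume.restrict Ω, Tendsto (fun n => a n x) atTop (𝓝 (U x)))
    (htan : ∀ᵐ x ∂volume.restrict Ω, ∀ j, inner ℝ (U x) (H x j) = 0) {ε : ℝ≥0∞} (hε : ε ≠ 0) :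
    ∃ C ⊆ Ω, C.Finite ∧ ∃ p : EuclideanSpace ℝ ι → F, ContDiffOn ℝ 1 p (Ω \ C) ∧
      (∀ x ∈ Ω \ C, ‖p x‖ = 1) ∧ ∫⁻ x in Ω, ‖grad p x - H x‖ₑ ≤ ε ∧
      ∫⁻ x in Ω, ‖U x - p x‖ₑ * ‖grad p x‖ₑ ≤ ε := by
  borelize F
  have ha : ∀ n, ContDiff ℝ 1 (a n) := fun n => (h.contDiff n).of_le (by exact_mod_cast le_top)
  have hdiff : ∀ {n}, Differentiable ℝ (a n) := (ha _).differentiable one_ne_zero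
  have : Nonempty ι := Fintype.card_pos_iff.1 (hι ▸ zero_lt_one.trans hF)
  have hε₃ : ε / 3 ≠ 0 := (ENNReal.div_pos hε ENNReal.ofNat_ne_top).ne'
  obtain ⟨n, η, hη, y, hyN, hyη, hle⟩ := h.exists_lintegral_projError_le hF hU hUm hH hae
    (fun n => measure_image_not_injective_fderiv_eq_zero volume (by simpa using hι) hdiff) hε₃
  have hfin : (closure Ω ∩ a n ⁻¹' {y}).Finite :=
    finite_inter_preimage_of_forall_injective_fderiv hdiff (fun x hx =>
      by_contra fun hinj => hyN ⟨x, hinj, hx⟩) hΩb.isCompact_closure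
  have hC : (Ω ∩ a n ⁻¹' {y}).Finite := hfin.subset (inter_subset_inter_left _ subset_closure)
  have hne : ∀ x ∈ Ω \ (Ω ∩ a n ⁻¹' {y}), a n x - y ≠ 0 := fun x hx =>
    sub_ne_zero.2 fun hxy => hx.2 ⟨hx.1, hxy⟩
  have hmem : ∀ᵐ x ∂volume.restrict Ω, x ∈ Ω \ (Ω ∩ a n ⁻¹' {y}) := by
    filter_upwards [ae_restrict_mem hΩ,
      ae_restrict_of_ae (measure_eq_zero_iff_ae_notMem.1 (hC.measure_zero volume))] with x hx hxC
    exact ⟨hx, hxC⟩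
  have hy : ∀ᵐ x ∂volume.restrict Ω, a n x ≠ y := hmem.mono fun x hx => sub_ne_zero.1 (hne x hx)
  refine ⟨_, inter_subset_left, hC, fun x => NormedSpace.normalize (a n x - y),
    fun x hx => ContDiffAt.contDiffWithinAt ?_,
    fun x hx => NormedSpace.norm_normalize (hne x hx), ?_, ?_⟩
  · have hsub : ContDiffAt ℝ 1 (fun x => a n x - y) x := (ha n).contDiffAt.sub contDiffAt_const
    exact ((hsub.norm ℝ (hne x hx)).inv (norm_ne_zero_iff.2 (hne x hx))).smul hsub
  · exact (lintegral_enorm_grad_normalize_sub_le hdiff hy hU htan hη hyη).trans <| hle.trans <|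
      ENNReal.div_le_of_le_mul <| le_mul_of_one_le_right' (by norm_num)
  · rw [← ENNReal.mul_div_cancel (a := 3) (b := ε) (by simp) (by simp)]
    exact (lintegral_enorm_sub_normalize_mul_grad_le hdiff hy hU htan hη hyη).trans
      (mul_le_mul_right hle 3)

end SphereProjection

section CircleRetraction

open scoped ComplexConjugate
open Complex (I)

/-- The map `r e^{iφ} ↦ (3r - r³)/2 · e^{iφ}`. It fixes the unit circle pointwise, and its radial
derivative vanishes there. -/
def radialSmoothstep (z : ℂ) : ℂ := ((3 - ‖z‖ ^ 2) / 2) • z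

/-- For `‖ζ‖ > 1`, a smooth map from the closed unit disc to the unit circle: the direction of
`ζ - radialSmoothstep z` is doubled and reflected. As `ζ` tends to a point of the circle, it
converges to the identity at the other points of the circle. -/
def circleRetraction (ζ z : ℂ) : ℂ :=
  -(conj ζ / ‖ζ‖) * ((ζ - radialSmoothstep z) / conj (ζ - radialSmoothstep z))

/-- A bound for the derivative of `circleRetraction ζ` at a point `z` of the closed unit disc whose
average over the circles `‖ζ‖ = τ > 1` does not depend on `z` and `τ`. -/
def circleRetractionBound (ζ z : ℂ) : ℝ :=
  5 / 2 + 3 * poissonKernel 0 (radialSmoothstep z) ζ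

theorem norm_radialSmoothstep (z : ℂ) : ‖radialSmoothstep z‖ = |3 - ‖z‖ ^ 2| / 2 * ‖z‖ := by
  rw [radialSmoothstep, norm_smul, Real.norm_eq_abs, abs_div, abs_two]

theorem one_sub_norm_radialSmoothstep_sq (z : ℂ) :
    1 - ‖radialSmoothstep z‖ ^ 2 = (1 - ‖z‖ ^ 2) ^ 2 * (4 - ‖z‖ ^ 2) / 4 := by
  rw [norm_radialSmoothstep, mul_pow, div_pow, sq_abs]
  ring

theorem norm_radialSmoothstep_le_one {z : ℂ} (hz : ‖z‖ ≤ 1) : ‖radialSmoothstep z‖ ≤ 1 := by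
  rw [← sq_le_one_iff₀ (norm_nonneg _), ← sub_nonneg, one_sub_norm_radialSmoothstep_sq]
  have : ‖z‖ ^ 2 ≤ 1 := pow_le_one₀ (norm_nonneg z) hz
  have : 0 ≤ 4 - ‖z‖ ^ 2 := by linarith
  positivity

theorem radialSmoothstep_of_norm_eq_one {z : ℂ} (hz : ‖z‖ = 1) : radialSmoothstep z = z := by
  rw [radialSmoothstep, hz]
  norm_num

theorem contDiff_radialSmoothstep : ContDiff ℝ 1 radialSmoothstep :=
  ((contDiff_const.sub (contDiff_id.norm_sq ℝ)).div_const 2).smul contDiff_id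

theorem fderiv_radialSmoothstep_apply (z h : ℂ) :
    fderiv ℝ radialSmoothstep z h =
      ((3 / 2 * (1 - ‖z‖ ^ 2) : ℝ) : ℂ) * h + ((conj z * h).im : ℝ) * (I * z) := by
  have hρ := (((hasFDerivAt_const (3 : ℝ) z).sub (hasFDerivAt_id z).norm_sq).mul_const
    (2⁻¹ : ℝ)).smul (hasFDerivAt_id z)
  have hρ' : fderiv ℝ radialSmoothstep z h =
      ((3 - ‖z‖ ^ 2) / 2) • h - inner ℝ z h • z := by
    refine (congrArg (· h) hρ.fderiv).trans ?_
    simp only [id_eq, Pi.sub_apply, ContinuousLinearMap.comp_id, zero_sub, smul_neg, add_apply,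
      smul_apply, ContinuousLinearMap.id_apply, ContinuousLinearMap.smulRight_apply, neg_apply,
      coe_innerSL_apply, Complex.real_smul, nsmul_eq_mul, Nat.cast_ofNat, smul_eq_mul, neg_smul,
      Complex.ofReal_mul, Complex.ofReal_sub, Complex.ofReal_ofNat, Complex.ofReal_pow,
      Complex.ofReal_inv, Complex.ofReal_div]
    ring
  rw [hρ', Complex.inner, ← Complex.normSq_eq_norm_sq]
  apply Complex.ext <;> simp [Complex.normSq_apply] <;> ring

section DivConj

variable {E : Type*} [NormedAddCommGroup E] [NormedSpace ℝ E] {Z : E → ℂ} {x : E}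

theorem contDiffAt_div_conj {n : WithTop ℕ∞} (hZ : ContDiffAt ℝ n Z x) (hx : Z x ≠ 0) :
    ContDiffAt ℝ n (fun y => Z y / conj (Z y)) x := by
  have hconj : ContDiffAt ℝ n (fun y => conj (Z y)) x :=
    Complex.conjCLE.contDiff.contDiffAt.comp x hZ
  simp only [div_eq_mul_inv]
  exact hZ.mul (hconj.inv ((map_ne_zero _).2 hx))

theorem norm_fderiv_div_conj_apply (hZ : DifferentiableAt ℝ Z x) (hx : Z x ≠ 0) (h : E) :
    ‖fderiv ℝ (fun y => Z y / conj (Z y)) x h‖ =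
      2 * |(fderiv ℝ Z x h * conj (Z x)).im| / ‖Z x‖ ^ 2 := by
  have hconj : HasFDerivAt (fun y => conj (Z y))
      ((Complex.conjCLE : ℂ →L[ℝ] ℂ) ∘L fderiv ℝ Z x) x :=
    Complex.conjCLE.hasFDerivAt.comp x hZ.hasFDerivAt
  have hx' : conj (Z x) ≠ 0 := (map_ne_zero _).2 hx
  have him : ((2 * (fderiv ℝ Z x h * conj (Z x)).im : ℝ) : ℂ) * I =
      fderiv ℝ Z x h * conj (Z x) - Z x * conj (fderiv ℝ Z x h) := by
    rw [← Complex.sub_conj, map_mul, Complex.conj_conj, mul_comm (Z x)]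
  have key : fderiv ℝ (fun y => Z y / conj (Z y)) x h =
      ((2 * (fderiv ℝ Z x h * conj (Z x)).im : ℝ) : ℂ) * I / conj (Z x) ^ 2 := by
    have hinv := (hasFDerivAt_inv' (𝕜 := ℝ) hx').comp x hconj
    simp only [div_eq_mul_inv]
    refine (congrArg (· h) (hZ.hasFDerivAt.mul hinv).fderiv).trans ?_
    rw [him]
    simp only [ContinuousLinearMap.neg_comp, smul_neg, Function.comp_apply, add_apply, neg_apply,
      smul_apply, ContinuousLinearMap.comp_apply, ContinuousLinearEquiv.coe_coe,
      ContinuousAlgEquiv.coeCLE_apply, Complex.conjCAE_apply,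
      ContinuousLinearMap.mulLeftRight_apply, smul_eq_mul]
    field_simp
    ring
  rw [key, norm_div, norm_mul, Complex.norm_real, Complex.norm_I, mul_one, norm_pow,
    Complex.norm_conj, Real.norm_eq_abs, abs_mul, abs_two]

end DivConj

section Bound

variable {ζ z : ℂ}

theorem sub_radialSmoothstep_ne_zero (hζ : 1 < ‖ζ‖) (hz : ‖z‖ ≤ 1) :
    ζ - radialSmoothstep z ≠ 0 :=
  sub_ne_zero.2 fun h => ((norm_radialSmoothstep_le_one hz).trans_lt hζ).ne' (congrArg norm h)

theorem norm_circleRetraction (hζ : 1 < ‖ζ‖) (hz : ‖z‖ ≤ 1) : ‖circleRetraction ζ z‖ = 1 := by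
  have hζ₀ : ‖ζ‖ ≠ 0 := by positivity
  have hne := norm_ne_zero_iff.2 (sub_radialSmoothstep_ne_zero hζ hz)
  rw [circleRetraction, norm_mul, norm_neg, norm_div, norm_div, Complex.norm_conj,
    Complex.norm_conj, Complex.norm_real, norm_norm, div_self hζ₀, div_self hne, mul_one]

theorem contDiffAt_circleRetraction (hζ : 1 < ‖ζ‖) (hz : ‖z‖ ≤ 1) :
    ContDiffAt ℝ 1 (circleRetraction ζ) z :=
  contDiffAt_const.mul (contDiffAt_div_conj
    (contDiffAt_const.sub contDiff_radialSmoothstep.contDiffAt)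
    (sub_radialSmoothstep_ne_zero hζ hz))

theorem norm_fderiv_circleRetraction_apply (hζ : 1 < ‖ζ‖) (hz : ‖z‖ ≤ 1) (h : ℂ) :
    ‖fderiv ℝ (circleRetraction ζ) z h‖ =
      2 * |(fderiv ℝ radialSmoothstep z h * conj (ζ - radialSmoothstep z)).im| /
        ‖ζ - radialSmoothstep z‖ ^ 2 := by
  have hζ₀ : ‖ζ‖ ≠ 0 := by positivity
  have hne := sub_radialSmoothstep_ne_zero hζ hz
  have hZ : ContDiffAt ℝ 1 (fun z => ζ - radialSmoothstep z) z :=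
    contDiffAt_const.sub contDiff_radialSmoothstep.contDiffAt
  have hZ' : fderiv ℝ (fun z => ζ - radialSmoothstep z) z h = -fderiv ℝ radialSmoothstep z h := by
    rw [fderiv_const_sub, neg_apply]
  have hF : fderiv ℝ (circleRetraction ζ) z h = -(conj ζ / ‖ζ‖) *
      fderiv ℝ (fun z => (ζ - radialSmoothstep z) / conj (ζ - radialSmoothstep z)) z h := by
    refine (congrArg (· h) (fderiv_const_mul ((contDiffAt_div_conj hZ hne).differentiableAt
      one_ne_zero) _)).trans ?_
    simp
  rw [hF, norm_mul, norm_neg, norm_div, Complex.norm_conj, Complex.norm_real, norm_norm,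
    div_self hζ₀, one_mul, norm_fderiv_div_conj_apply (hZ.differentiableAt one_ne_zero) hne, hZ',
    neg_mul, Complex.neg_im, abs_neg]

theorem two_mul_abs_re_mul_conj_sub_radialSmoothstep_le (hζ : 1 < ‖ζ‖) (hz : ‖z‖ ≤ 1) :
    2 * |(z * conj (ζ - radialSmoothstep z)).re| ≤
      ‖ζ‖ ^ 2 - ‖radialSmoothstep z‖ ^ 2 + ‖ζ - radialSmoothstep z‖ ^ 2 := by
  set ρ := radialSmoothstep z with hρ
  have hscale : |(z * conj (ζ - ρ)).re| ≤ |(ρ * conj (ζ - ρ)).re| := by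
    have hl : 1 ≤ |(3 - ‖z‖ ^ 2) / 2| :=
      le_abs.2 (Or.inl (by linarith [pow_le_one₀ (n := 2) (norm_nonneg z) hz]))
    rw [show ρ * conj (ζ - ρ) = ((3 - ‖z‖ ^ 2) / 2) • (z * conj (ζ - ρ)) by
      rw [hρ, radialSmoothstep, smul_mul_assoc], Complex.smul_re, smul_eq_mul, abs_mul]
    exact le_mul_of_one_le_left (abs_nonneg _) hl
  have hpolar : 2 * (ρ * conj (ζ - ρ)).re = ‖ζ‖ ^ 2 - ‖ρ‖ ^ 2 - ‖ζ - ρ‖ ^ 2 := by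
    simp only [← Complex.normSq_eq_norm_sq, Complex.normSq_apply, Complex.mul_re, Complex.conj_re,
      Complex.conj_im, Complex.sub_re, Complex.sub_im]
    ring
  have hρζ : ‖ρ‖ ^ 2 ≤ ‖ζ‖ ^ 2 := by
    gcongr
    exact (norm_radialSmoothstep_le_one hz).trans hζ.le
  calc 2 * |(z * conj (ζ - ρ)).re| ≤ |2 * (ρ * conj (ζ - ρ)).re| := by
        rw [abs_mul, abs_two]
        gcongr
    _ ≤ ‖ζ‖ ^ 2 - ‖ρ‖ ^ 2 + ‖ζ - ρ‖ ^ 2 := by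
        rw [hpolar, abs_le]
        constructor <;> linarith [sq_nonneg ‖ζ - ρ‖]

theorem norm_fderiv_circleRetraction_apply_le (hζ : 1 < ‖ζ‖) (hz : ‖z‖ ≤ 1) (h : ℂ) :
    ‖fderiv ℝ (circleRetraction ζ) z h‖ ≤
      circleRetractionBound ζ z * ‖h‖ := by
  have hD : 0 < ‖ζ - radialSmoothstep z‖ := norm_pos_iff.2 (sub_radialSmoothstep_ne_zero hζ hz)
  have hζ2 : 1 ≤ ‖ζ‖ ^ 2 := one_le_pow₀ hζ.le
  have hr : ‖z‖ ^ 2 ≤ 1 := pow_le_one₀ (norm_nonneg z) hz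
  have hρ := one_sub_norm_radialSmoothstep_sq z
  have hRe := two_mul_abs_re_mul_conj_sub_radialSmoothstep_le hζ hz
  have hβ : |(conj z * h).im| ≤ ‖h‖ := by
    refine (Complex.abs_im_le_norm _).trans ?_
    rw [norm_mul, Complex.norm_conj]
    exact mul_le_of_le_one_left (norm_nonneg h) hz
  have hα : |(h * conj (ζ - radialSmoothstep z)).im| ≤ ‖h‖ * ‖ζ - radialSmoothstep z‖ := by
    refine (Complex.abs_im_le_norm _).trans ?_
    rw [norm_mul, Complex.norm_conj]
  rw [norm_fderiv_circleRetraction_apply hζ hz, circleRetractionBound, poissonKernel_def,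
    sub_zero, sub_zero, fderiv_radialSmoothstep_apply, div_le_iff₀ (by positivity)]
  generalize radialSmoothstep z = ρ at *
  have him : (((3 / 2 * (1 - ‖z‖ ^ 2) : ℝ) * h + ((conj z * h).im : ℝ) * (I * z)) *
      conj (ζ - ρ)).im = 3 / 2 * (1 - ‖z‖ ^ 2) * (h * conj (ζ - ρ)).im +
        (conj z * h).im * (z * conj (ζ - ρ)).re := by
    rw [add_mul, mul_assoc, mul_assoc, mul_assoc I, Complex.add_im, Complex.im_ofReal_mul,
      Complex.im_ofReal_mul, Complex.I_mul_im]
  have hsmooth : 3 * (1 - ‖z‖ ^ 2) * ‖ζ - ρ‖ ≤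
      3 / 2 * ‖ζ - ρ‖ ^ 2 + 2 * (‖ζ‖ ^ 2 - ‖ρ‖ ^ 2) := by
    nlinarith [sq_nonneg (1 - ‖z‖ ^ 2 - ‖ζ - ρ‖),
      mul_nonneg (sq_nonneg (1 - ‖z‖ ^ 2)) (sub_nonneg.2 hr)]
  rw [him]
  calc 2 * |_| ≤ 3 * (1 - ‖z‖ ^ 2) * (‖h‖ * ‖ζ - ρ‖) +
        ‖h‖ * (‖ζ‖ ^ 2 - ‖ρ‖ ^ 2 + ‖ζ - ρ‖ ^ 2) := by
        have hα' := mul_le_mul_of_nonneg_left hα (mul_nonneg zero_le_three (sub_nonneg.2 hr))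
        have hβ' := mul_le_mul hβ hRe (by positivity) (norm_nonneg h)
        refine (mul_le_mul_of_nonneg_left (abs_add_le _ _) zero_le_two).trans ?_
        rw [abs_mul, abs_mul _ (z * _).re,
          abs_of_nonneg (by linarith : 0 ≤ 3 / 2 * (1 - ‖z‖ ^ 2))]
        linarith
    _ ≤ (5 / 2 * ‖ζ - ρ‖ ^ 2 + 3 * (‖ζ‖ ^ 2 - ‖ρ‖ ^ 2)) * ‖h‖ := by
        nlinarith [mul_le_mul_of_nonneg_right hsmooth (norm_nonneg h)]
    _ = (5 / 2 + 3 * ((‖ζ‖ ^ 2 - ‖ρ‖ ^ 2) / ‖ζ - ρ‖ ^ 2)) * ‖h‖ * ‖ζ - ρ‖ ^ 2 := by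
        field_simp

end Bound

theorem circleRetraction_of_norm_eq_one {ζ z : ℂ} (hζ : ‖ζ‖ = 1) (hz : ‖z‖ = 1) (h : z ≠ ζ) :
    circleRetraction ζ z = z := by
  have hne : conj ζ - conj z ≠ 0 := by
    rw [← map_sub]
    exact (map_ne_zero _).2 (sub_ne_zero.2 h.symm)
  have hζ' : ζ * conj ζ = 1 := by rw [Complex.mul_conj, Complex.normSq_eq_norm_sq, hζ]; simp
  have hz' : z * conj z = 1 := by rw [Complex.mul_conj, Complex.normSq_eq_norm_sq, hz]; simp
  rw [circleRetraction, radialSmoothstep_of_norm_eq_one hz, hζ, Complex.ofReal_one, div_one,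
    map_sub, mul_div_assoc', div_eq_iff hne]
  linear_combination -hζ' + hz'

theorem tendsto_circleRetraction {α : Type*} {l : Filter α} {ζ z : α → ℂ} {ζ₀ z₀ : ℂ}
    (hζ : Tendsto ζ l (𝓝 ζ₀)) (hz : Tendsto z l (𝓝 z₀)) (hζ₀ : ‖ζ₀‖ = 1) (hz₀ : ‖z₀‖ = 1)
    (h : z₀ ≠ ζ₀) : Tendsto (fun n => circleRetraction (ζ n) (z n)) l (𝓝 z₀) := by
  have hconj := Complex.continuous_conj
  have hρ := (contDiff_radialSmoothstep.continuous.tendsto z₀).comp hz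
  rw [radialSmoothstep_of_norm_eq_one hz₀] at hρ
  have hZ := hζ.sub hρ
  have hZ₀ : conj (ζ₀ - z₀) ≠ 0 := (map_ne_zero _).2 (sub_ne_zero.2 h.symm)
  have hn : (‖ζ₀‖ : ℂ) ≠ 0 := by simp [hζ₀]
  have hnorm : Tendsto (fun n => (‖ζ n‖ : ℂ)) l (𝓝 ‖ζ₀‖) :=
    (Complex.continuous_ofReal.tendsto _).comp hζ.norm
  have key := ((((hconj.tendsto _).comp hζ).div hnorm hn).neg).mul
    (hZ.div ((hconj.tendsto _).comp hZ) hZ₀)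
  have hval := circleRetraction_of_norm_eq_one hζ₀ hz₀ h
  rw [circleRetraction, radialSmoothstep_of_norm_eq_one hz₀] at hval
  rw [hval] at key
  exact key

/-- The uniform probability measure on the angles `(0, 2π]`, used to average over circles. -/
def uniformAngle : Measure ℝ := ProbabilityTheory.cond volume (Ioc 0 (2 * Real.pi))

instance : IsProbabilityMeasure uniformAngle :=
  ProbabilityTheory.cond_isProbabilityMeasure_of_finite
    (by simp [Real.pi_pos]) (by rw [Real.volume_Ioc]; exact ENNReal.ofReal_ne_top)

theorem lintegral_poissonKernel_uniformAngle {c w : ℂ} {R : ℝ} (hw : w ∈ ball c R) :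
    ∫⁻ θ, ENNReal.ofReal (poissonKernel c w (circleMap c R θ)) ∂uniformAngle = 1 := by
  have hR : ∀ θ, ‖circleMap c R θ - c‖ = R := fun θ => by
    rw [circleMap_sub_center, norm_circleMap_zero, abs_of_pos (pos_of_mem_ball hw)]
  have hwR : ‖w - c‖ < R := mem_ball_iff_norm.1 hw
  have hne : ∀ θ, ‖circleMap c R θ - c - (w - c)‖ ^ 2 ≠ 0 := fun θ => by
    have : circleMap c R θ - c - (w - c) ≠ 0 :=
      sub_ne_zero.2 fun h => hwR.ne ((congrArg norm h).symm.trans (hR θ))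
    positivity
  have hcont : Continuous fun θ => poissonKernel c w (circleMap c R θ) := by
    simp only [poissonKernel_def]
    exact Continuous.div (by fun_prop) (by fun_prop) hne
  have hnonneg : ∀ θ, 0 ≤ poissonKernel c w (circleMap c R θ) := fun θ => by
    rw [poissonKernel_def, hR]
    exact div_nonneg (sub_nonneg.2 (by gcongr)) (sq_nonneg _)
  have havg : ∫ θ in Ioc 0 (2 * Real.pi), poissonKernel c w (circleMap c R θ) = 2 * Real.pi := by
    have h := (diffContOnCl_const (c := (1 : ℂ))).circleAverage_poissonKernel_smul hw
    simp only [Real.circleAverage_def, Pi.smul_apply', Complex.real_smul, mul_one] at h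
    rw [intervalIntegral.integral_ofReal, ← Complex.ofReal_mul, Complex.ofReal_eq_one,
      inv_mul_eq_one₀ (by positivity), intervalIntegral.integral_of_le (by positivity)] at h
    exact h.symm
  rw [uniformAngle, ProbabilityTheory.cond, lintegral_smul_measure,
    ← ofReal_integral_eq_lintegral_ofReal hcont.integrableOn_Ioc (ae_of_all _ hnonneg), havg,
    Real.volume_Ioc, sub_zero, smul_eq_mul]
  exact ENNReal.inv_mul_cancel (by simp [Real.pi_pos]) ENNReal.ofReal_ne_top

theorem lintegral_circleRetractionBound_le {τ : ℝ} (hτ : 1 < τ) {z : ℂ} (hz : ‖z‖ ≤ 1) :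
    ∫⁻ θ, ENNReal.ofReal (circleRetractionBound (circleMap 0 τ θ) z) ∂uniformAngle ≤
      ENNReal.ofReal (11 / 2) := by
  have hw : radialSmoothstep z ∈ ball 0 τ :=
    mem_ball_zero_iff.2 ((norm_radialSmoothstep_le_one hz).trans_lt hτ)
  calc ∫⁻ θ, ENNReal.ofReal (circleRetractionBound (circleMap 0 τ θ) z) ∂uniformAngle
      ≤ ∫⁻ θ, (ENNReal.ofReal (5 / 2) + ENNReal.ofReal 3 *
          ENNReal.ofReal (poissonKernel 0 (radialSmoothstep z) (circleMap 0 τ θ)))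
          ∂uniformAngle := by
        refine lintegral_mono fun θ => ENNReal.ofReal_add_le.trans_eq ?_
        rw [ENNReal.ofReal_mul zero_le_three]
    _ = ENNReal.ofReal (5 / 2) + ENNReal.ofReal 3 := by
        rw [lintegral_add_left measurable_const, lintegral_const_mul' _ _ ENNReal.ofReal_ne_top,
          lintegral_poissonKernel_uniformAngle hw, lintegral_const, measure_univ, mul_one, mul_one]
    _ = ENNReal.ofReal (11 / 2) := by
        rw [← ENNReal.ofReal_add (by norm_num) zero_le_three]
        norm_num

end CircleRetraction

section CircleSelection

theorem exists_liminf_le_liminf_lintegral {Y : Type*} [MeasurableSpace Y] {ν : Measure Y}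
    [IsProbabilityMeasure ν] {q : Y → Prop} (hq : ∀ᵐ y ∂ν, q y) {f : ℕ → Y → ℝ≥0∞}
    (hf : ∀ k, AEMeasurable (f k) ν) :
    ∃ y, q y ∧ liminf (fun k => f k y) atTop ≤ liminf (fun k => ∫⁻ y, f k y ∂ν) atTop := by
  have hmeas : AEMeasurable (fun y => liminf (fun k => f k y) atTop) ν := by
    simp only [liminf_eq_iSup_iInf_of_nat]
    exact .iSup fun n => .biInf _ (to_countable _) fun k _ => hf k
  obtain ⟨y, hyN, hy⟩ := exists_notMem_null_le_lintegral hmeas (ae_iff.1 hq)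
  exact ⟨y, not_not.1 hyN, hy.trans (lintegral_liminf_le' hf)⟩

theorem measurable_circleRetractionBound :
    Measurable fun q : ℂ × ℂ => circleRetractionBound q.1 q.2 := by
  have hρ := contDiff_radialSmoothstep.continuous.measurable
  simp only [circleRetractionBound, poissonKernel_def]
  fun_prop

variable {X : Type*} [MeasurableSpace X] {μ : Measure X}

theorem aemeasurable_circleRetractionBound {ν : Measure ℝ} [SFinite ν] (τ : ℝ) {w : X → ℂ}
    (hw : AEMeasurable w μ) :
    AEMeasurable (Function.uncurry fun x θ =>
      ENNReal.ofReal (circleRetractionBound (circleMap 0 τ θ) (w x))) (μ.prod ν) := by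
  have hpair : AEMeasurable (fun q : X × ℝ => (circleMap 0 τ q.2, w q.1)) (μ.prod ν) :=
    ((continuous_circleMap 0 τ).measurable.comp measurable_snd).aemeasurable.prodMk hw.comp_fst
  exact (measurable_circleRetractionBound.comp_aemeasurable hpair).ennreal_ofReal

theorem lintegral_lintegral_circleRetractionBound_le [SFinite μ] {τ : ℝ} (hτ : 1 < τ) {w : X → ℂ}
    (hwm : AEMeasurable w μ) (hw : ∀ᵐ x ∂μ, ‖w x‖ ≤ 1) {g : X → ℝ≥0∞} (hg : AEMeasurable g μ) :
    ∫⁻ θ, ∫⁻ x, ENNReal.ofReal (circleRetractionBound (circleMap 0 τ θ) (w x)) * g x ∂μ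
      ∂uniformAngle ≤ ENNReal.ofReal (11 / 2) * ∫⁻ x, g x ∂μ :=
  lintegral_lintegral_mul_le (aemeasurable_circleRetractionBound τ hwm)
    (hw.mono fun _ hx => lintegral_circleRetractionBound_le hτ hx) hg

theorem ae_uniformAngle_forall_ae_ne_circleMap [SFinite μ] {W : X → ℂ} (hW : NullMeasurable W μ)
    (c : ℂ) {R : ℝ} (hR : R ≠ 0) : ∀ᵐ θ ∂uniformAngle, ∀ᵐ x ∂μ, W x ≠ circleMap c R θ := by
  have hbad : uniformAngle (circleMap c R ⁻¹' {ζ | 0 < μ {x | W x = ζ}}) = 0 :=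
    ProbabilityTheory.cond_absolutelyContinuous
      (((Measure.countable_meas_level_set_pos₀ hW).preimage_circleMap c hR).measure_zero volume)
  filter_upwards [measure_eq_zero_iff_ae_notMem.1 hbad] with θ hθ
  simpa [ae_iff, pos_iff_ne_zero] using hθ

theorem exists_tendsto_circleRetraction [SFinite μ] {w : ℕ → X → ℂ} {W : X → ℂ}
    {g : ℕ → X → ℝ≥0∞} {B : ℝ≥0∞} (hwm : ∀ k, AEMeasurable (w k) μ)
    (hw : ∀ k, ∀ᵐ x ∂μ, ‖w k x‖ ≤ 1) (hW : ∀ᵐ x ∂μ, ‖W x‖ = 1)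
    (hwW : ∀ᵐ x ∂μ, Tendsto (fun k => w k x) atTop (𝓝 (W x)))
    (hg : ∀ k, AEMeasurable (g k) μ) (hB : ∀ᶠ k in atTop, ∫⁻ x, g k x ∂μ ≤ B) :
    ∃ ζ : ℕ → ℂ, (∀ k, 1 < ‖ζ k‖) ∧
      (∀ᵐ x ∂μ, Tendsto (fun k => circleRetraction (ζ k) (w k x)) atTop (𝓝 (W x))) ∧
      liminf (fun k => ∫⁻ x, ENNReal.ofReal (circleRetractionBound (ζ k) (w k x)) * g k x ∂μ)
        atTop ≤ ENNReal.ofReal (11 / 2) * B := by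
  let τ : ℕ → ℝ := fun k => 1 + 1 / (k + 1)
  have hτ : ∀ k, 1 < τ k := fun k => lt_add_of_pos_right 1 Nat.one_div_pos_of_nat
  have hτ_lim : Tendsto τ atTop (𝓝 1) := by
    simpa only [add_zero] using tendsto_one_div_add_atTop_nhds_zero_nat.const_add (1 : ℝ)
  let f : ℕ → ℝ → ℝ≥0∞ := fun k θ =>
    ∫⁻ x, ENNReal.ofReal (circleRetractionBound (circleMap 0 (τ k) θ) (w k x)) * g k x ∂μ
  have hf : ∀ k, AEMeasurable (f k) uniformAngle := fun k =>
    ((aemeasurable_circleRetractionBound (τ k) (hwm k)).mul (hg k).comp_fst).lintegral_prod_left'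
  have hf_le : ∀ᶠ k in atTop, ∫⁻ θ, f k θ ∂uniformAngle ≤ ENNReal.ofReal (11 / 2) * B := by
    filter_upwards [hB] with k hk
    exact (lintegral_lintegral_circleRetractionBound_le (hτ k) (hwm k) (hw k) (hg k)).trans
      (mul_le_mul_right hk _)
  have hWm : AEMeasurable W μ := aemeasurable_of_tendsto_metrizable_ae atTop hwm hwW
  obtain ⟨θ, hθW, hfθ⟩ := exists_liminf_le_liminf_lintegral
    (ae_uniformAngle_forall_ae_ne_circleMap hWm.nullMeasurable 0 one_ne_zero) hf
  refine ⟨fun k => circleMap 0 (τ k) θ, fun k => ?_, ?_, hfθ.trans ?_⟩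
  · rw [norm_circleMap_zero]
    exact (hτ k).trans_le (le_abs_self _)
  · have hζ : Tendsto (fun k => circleMap 0 (τ k) θ) atTop (𝓝 (circleMap 0 1 θ)) := by
      have : Continuous fun τ : ℝ => circleMap 0 τ θ := by
        simp only [circleMap]
        fun_prop
      exact (this.tendsto 1).comp hτ_lim
    filter_upwards [hW, hwW, hθW] with x hx hwx hne
    exact tendsto_circleRetraction hζ hwx (by simp) hx hne
  · exact (liminf_le_liminf hf_le).trans_eq (liminf_const _)

end CircleSelection

section CircleValued

open scoped ComplexConjugate

section General

variable {ι F F' : Type*} [DecidableEq ι] [NormedAddCommGroup F] [NormedSpace ℝ F]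
  [NormedAddCommGroup F'] [NormedSpace ℝ F']

theorem measurable_grad [Finite ι] [CompleteSpace F] [MeasurableSpace F] [BorelSpace F]
    (v : EuclideanSpace ℝ ι → F) : Measurable (grad v) :=
  have := Fintype.ofFinite ι
  (WithLp.measurable_toLp 2 _).comp <|
    measurable_pi_lambda _ fun _ => measurable_fderiv_apply_const ℝ v _

variable [Fintype ι] {S : Set (EuclideanSpace ℝ ι)} {x : EuclideanSpace ℝ ι}

theorem norm_grad_linearIsometryEquiv_comp (e : F ≃ₗᵢ[ℝ] F') (v : EuclideanSpace ℝ ι → F) :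
    ‖grad (fun y => e (v y)) x‖ = ‖grad v x‖ := by
  have he : fderiv ℝ (fun y => e (v y)) x = _ := e.comp_fderiv
  simp [PiLp.norm_eq_of_L2, he]

theorem IsSmoothApprox.mono {T : Set (EuclideanSpace ℝ ι)} {U : EuclideanSpace ℝ ι → F}
    {H : EuclideanSpace ℝ ι → PiLp 2 fun _ : ι => F} {a : ℕ → EuclideanSpace ℝ ι → F}
    (h : IsSmoothApprox T U H a) (hST : S ⊆ T) : IsSmoothApprox S U H a where
  contDiff := h.contDiff
  norm_le_one := h.norm_le_one
  tendsto := tendsto_of_tendsto_of_tendsto_of_le_of_le tendsto_const_nhds h.tendsto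
    (fun _ => zero_le) fun _ => lintegral_mono_set hST
  tendsto_grad := tendsto_of_tendsto_of_tendsto_of_le_of_le tendsto_const_nhds h.tendsto_grad
    (fun _ => zero_le) fun _ => lintegral_mono_set hST

end General

theorem sqrt_one_add_sq_le_add {a b h : ℝ} (ha : 0 ≤ a) (hb : 0 ≤ b) (hab : a ≤ h + b) :
    √(1 + a ^ 2) ≤ √(1 + h ^ 2) + b := by
  have hh : h ≤ √(1 + h ^ 2) := Real.le_sqrt_of_sq_le (by linarith)
  refine Real.sqrt_le_iff.2 ⟨by positivity, ?_⟩
  nlinarith [Real.sq_sqrt (show 0 ≤ 1 + h ^ 2 by positivity), mul_le_mul_of_nonneg_left hh hb]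

theorem circleRetractionBound_nonneg {ζ z : ℂ} (hζ : 1 < ‖ζ‖) (hz : ‖z‖ ≤ 1) :
    0 ≤ circleRetractionBound ζ z := by
  simpa using (norm_nonneg _).trans (norm_fderiv_circleRetraction_apply_le hζ hz 1)

variable {ι : Type*} [Fintype ι] [DecidableEq ι] {S : Set (EuclideanSpace ℝ ι)}
  {x : EuclideanSpace ℝ ι} {ζ : ℂ} {p w : EuclideanSpace ℝ ι → ℂ}

theorem norm_grad_circleRetraction_comp_le (hζ : 1 < ‖ζ‖) (hw : DifferentiableAt ℝ w x)
    (hwx : ‖w x‖ ≤ 1) :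
    ‖grad (fun y => circleRetraction ζ (w y)) x‖ ≤
      circleRetractionBound ζ (w x) * ‖grad w x‖ := by
  refine norm_le_mul_norm_of_forall_apply_le (circleRetractionBound_nonneg hζ hwx) fun j => ?_
  have hchain : fderiv ℝ (fun y => circleRetraction ζ (w y)) x =
      (fderiv ℝ (circleRetraction ζ) (w x)).comp (fderiv ℝ w x) :=
    fderiv_comp x ((contDiffAt_circleRetraction hζ hwx).differentiableAt one_ne_zero) hw
  rw [grad_apply, hchain]
  exact norm_fderiv_circleRetraction_apply_le hζ hwx _

theorem norm_grad_mul_circleRetraction_le (hζ : 1 < ‖ζ‖) (hp : DifferentiableAt ℝ p x)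
    (hpx : ‖p x‖ = 1) (hw : DifferentiableAt ℝ w x) (hwx : ‖w x‖ ≤ 1) :
    ‖grad (fun y => p y * circleRetraction ζ (w y)) x‖ ≤
      ‖grad p x‖ + circleRetractionBound ζ (w x) * ‖grad w x‖ := by
  have hF : DifferentiableAt ℝ (fun y => circleRetraction ζ (w y)) x :=
    ((contDiffAt_circleRetraction hζ hwx).differentiableAt one_ne_zero).comp x hw
  rw [grad_mul hp hF, add_comm ‖grad p x‖]
  refine (norm_add_le _ _).trans ?_
  rw [norm_smul, norm_smul, hpx, norm_circleRetraction hζ hwx, one_mul, one_mul]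
  gcongr
  exact norm_grad_circleRetraction_comp_le hζ hw hwx

theorem norm_grad_mul_conj_le {a : EuclideanSpace ℝ ι → ℂ} (ha : DifferentiableAt ℝ a x)
    (hp : DifferentiableAt ℝ p x) (hp1 : ∀ᶠ y in 𝓝 x, ‖p y‖ = 1) :
    ‖grad (fun y => a y * conj (p y)) x‖ ≤
      ‖a x - p x‖ * ‖grad p x‖ + ‖grad a x - grad p x‖ := by
  have hconj : DifferentiableAt ℝ (fun y => conj (p y)) x :=
    Complex.conjLIE.differentiable.differentiableAt.comp x hp
  have hsplit : (fun y => a y * conj (p y)) =ᶠ[𝓝 x] fun y => (a y - p y) * conj (p y) + 1 := by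
    filter_upwards [hp1] with y hy
    rw [sub_mul, Complex.mul_conj', hy]
    norm_num
  have hnorm : ‖grad (fun y => conj (p y)) x‖ = ‖grad p x‖ :=
    norm_grad_linearIsometryEquiv_comp Complex.conjLIE p
  rw [grad_congr hsplit, grad_add_const, grad_mul (ha.fun_sub hp) hconj, grad_sub ha hp]
  refine (norm_add_le _ _).trans_eq ?_
  rw [norm_smul, norm_smul, Complex.norm_conj, hp1.self_of_nhds, one_mul, hnorm]

theorem enorm_grad_mul_conj_le {a : EuclideanSpace ℝ ι → ℂ} (ha : DifferentiableAt ℝ a x)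
    (hp : DifferentiableAt ℝ p x) (hp1 : ∀ᶠ y in 𝓝 x, ‖p y‖ = 1) (U : ℂ)
    (H : PiLp 2 fun _ : ι => ℂ) :
    ‖grad (fun y => a y * conj (p y)) x‖ₑ ≤
      (‖a x - U‖ₑ * ‖grad p x‖ₑ + ‖grad a x - H‖ₑ) +
        (‖U - p x‖ₑ * ‖grad p x‖ₑ + ‖grad p x - H‖ₑ) := by
  have hreal := (norm_grad_mul_conj_le ha hp hp1).trans <| add_le_add
    (mul_le_mul_of_nonneg_right (norm_sub_le_norm_sub_add_norm_sub (a x) U (p x)) (norm_nonneg _))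
    (norm_sub_le_norm_sub_add_norm_sub (grad a x) H (grad p x))
  rw [add_mul, add_add_add_comm, norm_sub_rev H] at hreal
  simp only [← ofReal_norm]
  rw [← ENNReal.ofReal_mul (norm_nonneg _), ← ENNReal.ofReal_mul (norm_nonneg _),
    ← ENNReal.ofReal_add (by positivity) (by positivity),
    ← ENNReal.ofReal_add (by positivity) (by positivity),
    ← ENNReal.ofReal_add (by positivity) (by positivity)]
  exact ENNReal.ofReal_le_ofReal hreal

theorem ofReal_sqrt_one_add_norm_grad_sq_le (hζ : 1 < ‖ζ‖) (hp : DifferentiableAt ℝ p x)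
    (hpx : ‖p x‖ = 1) (hw : DifferentiableAt ℝ w x) (hwx : ‖w x‖ ≤ 1)
    (H : PiLp 2 fun _ : ι => ℂ) :
    ENNReal.ofReal √(1 + ‖grad (fun y => p y * circleRetraction ζ (w y)) x‖ ^ 2) ≤
      ENNReal.ofReal √(1 + ‖H‖ ^ 2) + ‖grad p x - H‖ₑ +
        ENNReal.ofReal (circleRetractionBound ζ (w x)) * ‖grad w x‖ₑ := by
  have hB := circleRetractionBound_nonneg hζ hwx
  have hgrad : ‖grad (fun y => p y * circleRetraction ζ (w y)) x‖ ≤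
      ‖H‖ + (‖grad p x - H‖ + circleRetractionBound ζ (w x) * ‖grad w x‖) := by
    linarith [norm_grad_mul_circleRetraction_le hζ hp hpx hw hwx, norm_le_norm_sub_add (grad p x) H]
  rw [← ofReal_norm, ← ofReal_norm, ← ENNReal.ofReal_mul hB, add_assoc,
    ← ENNReal.ofReal_add (by positivity) (by positivity),
    ← ENNReal.ofReal_add (by positivity) (by positivity)]
  exact ENNReal.ofReal_le_ofReal
    (sqrt_one_add_sq_le_add (norm_nonneg _) (by positivity) hgrad)

variable {U : EuclideanSpace ℝ ι → ℂ} {H : EuclideanSpace ℝ ι → PiLp 2 fun _ : ι => ℂ}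

theorem lintegral_enorm_grad_mul_conj_le {a : EuclideanSpace ℝ ι → ℂ} (ha : ContDiff ℝ 1 a)
    (hS : IsOpen S) (hUm : AEStronglyMeasurable U (volume.restrict S))
    (hHm : AEStronglyMeasurable H (volume.restrict S)) (hp : ContDiffOn ℝ 1 p S)
    (hp1 : ∀ x ∈ S, ‖p x‖ = 1) :
    ∫⁻ x in S, ‖grad (fun y => a y * conj (p y)) x‖ₑ ≤
      ((∫⁻ x in S, ‖a x - U x‖ₑ * ‖grad p x‖ₑ) + ∫⁻ x in S, ‖grad a x - H x‖ₑ) +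
        ((∫⁻ x in S, ‖U x - p x‖ₑ * ‖grad p x‖ₑ) + ∫⁻ x in S, ‖grad p x - H x‖ₑ) := by
  have hgrad_sub : ∀ v : EuclideanSpace ℝ ι → ℂ,
      AEMeasurable (fun x => ‖grad v x - H x‖ₑ) (volume.restrict S) := fun v =>
    ((measurable_grad v).aestronglyMeasurable.sub hHm).enorm
  have haU : AEMeasurable (fun x => ‖a x - U x‖ₑ * ‖grad p x‖ₑ) (volume.restrict S) :=
    (ha.continuous.aestronglyMeasurable.sub hUm).enorm.mul (measurable_grad p).enorm.aemeasurable
  rw [← lintegral_add_left' haU, ← lintegral_add_right' _ (hgrad_sub p),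
    ← lintegral_add_left' (haU.fun_add (hgrad_sub a))]
  exact setLIntegral_mono_ae' hS.measurableSet <| .of_forall fun x hx =>
    enorm_grad_mul_conj_le (ha.differentiable one_ne_zero x)
      ((hp.contDiffAt (hS.mem_nhds hx)).differentiableAt one_ne_zero)
      (eventually_of_mem (hS.mem_nhds hx) hp1) _ _

theorem lintegral_enorm_grad_ne_top (hH : IntegrableOn H S) {v : EuclideanSpace ℝ ι → ℂ}
    (hv : ∫⁻ x in S, ‖grad v x - H x‖ₑ ≠ ⊤) : ∫⁻ x in S, ‖grad v x‖ₑ ≠ ⊤ := by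
  have hsub : AEMeasurable (fun x => ‖grad v x - H x‖ₑ) (volume.restrict S) :=
    ((measurable_grad v).aestronglyMeasurable.sub hH.1).enorm
  refine ne_top_of_le_ne_top (ENNReal.add_ne_top.2 ⟨hv, hH.2.ne⟩) ?_
  rw [← lintegral_add_left' hsub]
  exact lintegral_mono fun x => by simpa using enorm_add_le (grad v x - H x) (H x)

variable {a : ℕ → EuclideanSpace ℝ ι → ℂ} {e : ℝ≥0∞}

theorem IsSmoothApprox.eventually_lintegral_enorm_grad_mul_conj_le (h : IsSmoothApprox S U H a)
    (hS : IsOpen S) (hU : ∀ᵐ x ∂volume.restrict S, ‖U x‖ = 1)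
    (hUm : AEStronglyMeasurable U (volume.restrict S)) (hH : IntegrableOn H S)
    (hae : ∀ᵐ x ∂volume.restrict S, Tendsto (fun n => a n x) atTop (𝓝 (U x)))
    (hp : ContDiffOn ℝ 1 p S) (hp1 : ∀ x ∈ S, ‖p x‖ = 1)
    (hpH : ∫⁻ x in S, ‖grad p x - H x‖ₑ ≤ e)
    (hpU : ∫⁻ x in S, ‖U x - p x‖ₑ * ‖grad p x‖ₑ ≤ e) (he₀ : e ≠ 0) (he : e ≠ ⊤) :
    ∀ᶠ n in atTop, ∫⁻ x in S, ‖grad (fun y => a n y * conj (p y)) x‖ₑ ≤ 3 * e := by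
  have hlim := (h.tendsto_lintegral_enorm_sub_mul hU hUm hae
    (measurable_grad p).enorm.aemeasurable
    (lintegral_enorm_grad_ne_top hH (ne_top_of_le_ne_top he hpH))).add h.tendsto_grad
  rw [add_zero] at hlim
  filter_upwards [hlim.eventually (Iic_mem_nhds (pos_iff_ne_zero.2 he₀))] with n hn
  calc ∫⁻ x in S, ‖grad (fun y => a n y * conj (p y)) x‖ₑ
      ≤ e + (e + e) :=
        (lintegral_enorm_grad_mul_conj_le ((h.contDiff n).of_le (by exact_mod_cast le_top)) hS hUm
          hH.1 hp hp1).trans (add_le_add hn (add_le_add hpU hpH))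
    _ = 3 * e := by ring

theorem lintegral_sqrt_one_add_norm_grad_sq_le (hS : IsOpen S) (hζ : 1 < ‖ζ‖)
    (hH : AEStronglyMeasurable H (volume.restrict S)) (hp : ContDiffOn ℝ 1 p S)
    (hp1 : ∀ x ∈ S, ‖p x‖ = 1) (hpH : ∫⁻ x in S, ‖grad p x - H x‖ₑ ≤ e)
    (hw : ContDiffOn ℝ 1 w S) (hw1 : ∀ x ∈ S, ‖w x‖ ≤ 1) :
    ∫⁻ x in S, ENNReal.ofReal
        √(1 + ‖grad (fun y => p y * circleRetraction ζ (w y)) x‖ ^ 2) ≤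
      (∫⁻ x in S, ENNReal.ofReal √(1 + ‖H x‖ ^ 2)) + e +
        ∫⁻ x in S, ENNReal.ofReal (circleRetractionBound ζ (w x)) * ‖grad w x‖ₑ := by
  have harea : AEMeasurable (fun x => ENNReal.ofReal √(1 + ‖H x‖ ^ 2)) (volume.restrict S) :=
    ((hH.norm.aemeasurable.pow_const 2).const_add 1).sqrt.ennreal_ofReal
  have hsub : AEMeasurable (fun x => ‖grad p x - H x‖ₑ) (volume.restrict S) :=
    ((measurable_grad p).aestronglyMeasurable.sub hH).enorm
  have hdiff : ∀ {v : EuclideanSpace ℝ ι → ℂ}, ContDiffOn ℝ 1 v S → ∀ x ∈ S,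
      DifferentiableAt ℝ v x := fun hv x hx =>
    (hv.contDiffAt (hS.mem_nhds hx)).differentiableAt one_ne_zero
  refine (setLIntegral_mono_ae' hS.measurableSet <| .of_forall fun x hx =>
    ofReal_sqrt_one_add_norm_grad_sq_le hζ (hdiff hp x hx) (hp1 x hx) (hdiff hw x hx) (hw1 x hx)
      (H x)).trans ?_
  rw [lintegral_add_left' (harea.fun_add hsub), lintegral_add_left' harea]
  gcongr

theorem IsSmoothApprox.exists_unit_tendsto_ae (h : IsSmoothApprox S U H a)
    (hS : IsOpen S) (hU : ∀ᵐ x ∂volume.restrict S, ‖U x‖ = 1)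
    (hUm : AEStronglyMeasurable U (volume.restrict S)) (hH : IntegrableOn H S)
    (hae : ∀ᵐ x ∂volume.restrict S, Tendsto (fun n => a n x) atTop (𝓝 (U x)))
    (hp : ContDiffOn ℝ 1 p S) (hp1 : ∀ x ∈ S, ‖p x‖ = 1)
    (hpH : ∫⁻ x in S, ‖grad p x - H x‖ₑ ≤ e)
    (hpU : ∫⁻ x in S, ‖U x - p x‖ₑ * ‖grad p x‖ₑ ≤ e) (he₀ : e ≠ 0) (he : e ≠ ⊤) :
    ∃ v : ℕ → EuclideanSpace ℝ ι → ℂ, (∀ n, ContDiffOn ℝ 1 (v n) S) ∧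
      (∀ n, ∀ x ∈ S, ‖v n x‖ = 1) ∧
      (∀ᵐ x ∂volume.restrict S, Tendsto (fun n => v n x) atTop (𝓝 (U x))) ∧
      liminf (fun n => ∫⁻ x in S, ENNReal.ofReal √(1 + ‖grad (v n) x‖ ^ 2)) atTop ≤
        (∫⁻ x in S, ENNReal.ofReal √(1 + ‖H x‖ ^ 2)) + ENNReal.ofReal (35 / 2) * e := by
  let w : ℕ → EuclideanSpace ℝ ι → ℂ := fun n x => a n x * conj (p x)
  have hw : ∀ n, ContDiffOn ℝ 1 (w n) S := fun n =>
    ((h.contDiff n).of_le (by exact_mod_cast le_top)).contDiffOn.mul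
      (Complex.conjCLE.contDiff.comp_contDiffOn hp)
  have hw1 : ∀ n, ∀ x ∈ S, ‖w n x‖ ≤ 1 := fun n x hx => by
    simpa [w, hp1 x hx] using h.norm_le_one n x
  have hmem : ∀ᵐ x ∂volume.restrict S, x ∈ S := ae_restrict_mem hS.measurableSet
  obtain ⟨ζ, hζ, hlim, hliminf⟩ := exists_tendsto_circleRetraction
    (fun n => (hw n).continuousOn.aemeasurable hS.measurableSet)
    (fun n => hmem.mono (hw1 n))
    (hU.mp (hmem.mono fun x hx hUx => show ‖U x * conj (p x)‖ = 1 by simp [hUx, hp1 x hx]))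
    (hae.mono fun x hx => hx.mul_const (conj (p x)))
    (fun n => (measurable_grad (w n)).enorm.aemeasurable)
    (h.eventually_lintegral_enorm_grad_mul_conj_le hS hU hUm hH hae hp hp1 hpH hpU he₀ he)
  refine ⟨fun n x => p x * circleRetraction (ζ n) (w n x), fun n x hx => ?_, fun n x hx => ?_,
    ?_, ?_⟩
  · exact (hp x hx).mul <|
      (contDiffAt_circleRetraction (hζ n) (hw1 n x hx)).comp_contDiffWithinAt x (hw n x hx)
  · rw [norm_mul, hp1 x hx, norm_circleRetraction (hζ n) (hw1 n x hx), one_mul]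
  · filter_upwards [hlim, hmem] with x hx hxS
    have hUx : p x * (U x * conj (p x)) = U x := by
      rw [mul_left_comm, Complex.mul_conj', hp1 x hxS]
      norm_num
    simpa only [hUx] using hx.const_mul (p x)
  · refine (liminf_le_liminf (.of_forall fun n => lintegral_sqrt_one_add_norm_grad_sq_le hS (hζ n)
      hH.1 hp hp1 hpH (hw n) (hw1 n))).trans ?_
    rw [liminf_const_add _ _ _ (by isBoundedDefault) (by isBoundedDefault), add_assoc]
    refine add_le_add_right ((add_le_add_right hliminf e).trans_eq ?_) _
    rw [← ENNReal.ofReal_ofNat 3, ← mul_assoc, ← ENNReal.ofReal_mul (by norm_num),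
      ← one_add_mul, ← ENNReal.ofReal_one, ← ENNReal.ofReal_add one_pos.le (by norm_num)]
    norm_num

end CircleValued

section RelaxedArea

section Codomain

variable {ι F F' : Type*} [Fintype ι] [DecidableEq ι] [NormedAddCommGroup F] [NormedSpace ℝ F]
  [CompleteSpace F] [NormedAddCommGroup F'] [NormedSpace ℝ F'] [CompleteSpace F']

theorem HasWeakGrad.continuousLinearMap_comp {Ω : Set (EuclideanSpace ℝ ι)}
    {U : EuclideanSpace ℝ ι → F} {H : EuclideanSpace ℝ ι → PiLp 2 fun _ : ι => F}
    (h : HasWeakGrad Ω U H) (L : F →L[ℝ] F') :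
    HasWeakGrad Ω (fun x => L (U x)) fun x => WithLp.toLp 2 fun j => L (H x j) where
  integrableOn := L.integrable_comp h.integrableOn
  integrableOn_grad := .of_eval_piLp fun j => L.integrable_comp (h.integrableOn_grad.eval_piLp j)
  integral_fderiv_smul φ hφ hφc hφΩ j := by
    have hU := h.integrableOn.locallyIntegrable.integrable_smul_left_of_hasCompactSupport
      ((hφ.continuous_fderiv (by simp)).clm_apply continuous_const)
      (hφc.fderiv_apply (𝕜 := ℝ) (EuclideanSpace.single j 1))
    have hH := (h.integrableOn_grad.eval_piLp j).locallyIntegrable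
      |>.integrable_smul_left_of_hasCompactSupport hφ.continuous hφc
    simpa only [← map_smul, L.integral_comp_comm hU, L.integral_comp_comm hH, map_neg] using
      congrArg L (h.integral_fderiv_smul φ hφ hφc hφΩ j)

end Codomain

/-- The columns of a real matrix as Euclidean vectors, the form in which `grad` stores a Jacobian
matrix. -/
def euclideanColumns {m n : Type*} (M : Matrix m n ℝ) : PiLp 2 fun _ : n => EuclideanSpace ℝ m :=
  WithLp.toLp 2 fun j => WithLp.toLp 2 fun i => M i j

theorem norm_euclideanColumns_sq {m n : Type*} [Fintype m] [Fintype n] (M : Matrix m n ℝ) :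
    ‖euclideanColumns M‖ ^ 2 = ∑ i, ∑ j, M i j ^ 2 := by
  rw [Finset.sum_comm]
  simp [euclideanColumns, PiLp.norm_sq_eq_of_L2]

theorem MemW11.hasWeakGrad {Ω : Set R2} {u : R2 → R2} {G : R2 → Matrix (Fin 2) (Fin 2) ℝ}
    (hu : MemW11 Ω u G) : HasWeakGrad Ω u fun x => euclideanColumns (G x) where
  integrableOn := hu.1
  integrableOn_grad := .of_eval_piLp fun j => .of_eval_piLp fun i => hu.2.1 i j
  integral_fderiv_smul φ hφ hφc hφΩ j := by
    have hU : Integrable (fun x => fderiv ℝ φ x (EuclideanSpace.single j 1) • u x)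
        (volume.restrict Ω) :=
      hu.1.locallyIntegrable.integrable_smul_left_of_hasCompactSupport
        ((hφ.continuous_fderiv (by simp)).clm_apply continuous_const) (hφc.fderiv_apply (𝕜 := ℝ) _)
    have hG : ∀ i, Integrable (fun x => φ x * G x i j) (volume.restrict Ω) := fun i =>
      (hu.2.1 i j).locallyIntegrable.integrable_smul_left_of_hasCompactSupport hφ.continuous hφc
    ext i
    rw [eval_integral_piLp fun i => hU.eval_piLp i, PiLp.neg_apply, eval_integral_piLp hG]
    simpa only [PiLp.smul_apply, smul_eq_mul, mul_comm, euclideanColumns] using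
      hu.2.2 φ hφ hφc hφΩ i j

theorem inner_grad_eq_zero {ι F : Type*} [Finite ι] [DecidableEq ι] [NormedAddCommGroup F]
    [InnerProductSpace ℝ F] {v : EuclideanSpace ℝ ι → F} {x : EuclideanSpace ℝ ι}
    (hv : DifferentiableAt ℝ v x) (hv1 : ∀ᶠ y in 𝓝 x, ‖v y‖ = 1) (j : ι) :
    inner ℝ (v x) (grad v x j) = 0 := by
  have hconst : (fun y => ‖v y‖ ^ 2) =ᶠ[𝓝 x] fun _ => (1 : ℝ) :=
    hv1.mono fun y hy => by simp [hy]
  simpa [hconst.fderiv_eq] using (congr($(grad_norm_sq hv) j)).symm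

theorem det_jacobianMatrix_eq_zero {v : R2 → R2} {x : R2} (hv : DifferentiableAt ℝ v x)
    (hv1 : ∀ᶠ y in 𝓝 x, ‖v y‖ = 1) : (jacobianMatrix v x).det = 0 := by
  refine Matrix.exists_vecMul_eq_zero_iff.1 ⟨v x, fun h => ?_, ?_⟩
  · have hv0 : v x = 0 := WithLp.ofLp_injective 2 h
    simpa [hv0] using hv1.self_of_nhds
  · ext j
    simpa [PiLp.inner_apply, Matrix.vecMul, dotProduct, jacobianMatrix, mul_comm] using
      inner_grad_eq_zero hv hv1 j

theorem classicalArea_of_norm_eq_one {A : Set R2} {v : R2 → R2} (hA : IsOpen A)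
    (hv : ContDiffOn ℝ 1 v A) (hv1 : ∀ x ∈ A, ‖v x‖ = 1) :
    classicalArea A v = ∫⁻ x in A, ENNReal.ofReal √(1 + ‖grad v x‖ ^ 2) := by
  refine setLIntegral_congr_fun hA.measurableSet fun x hx => ?_
  have hdet := det_jacobianMatrix_eq_zero
    ((hv.contDiffAt (hA.mem_nhds hx)).differentiableAt one_ne_zero)
    (eventually_of_mem (hA.mem_nhds hx) hv1)
  have hgrad : grad v x = euclideanColumns (jacobianMatrix v x) := rfl
  simp [hdet, hgrad, norm_euclideanColumns_sq]

theorem relaxedArea_le_liminf_of_tendsto_ae {A : Set R2} {u : R2 → R2} {v : ℕ → R2 → R2} {C : ℝ}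
    (hA : MeasurableSet A) (hA' : volume A ≠ ⊤) (hu : IntegrableOn u A)
    (hv : ∀ k, ContDiffOn ℝ 1 (v k) A) (hC : ∀ k, ∀ x ∈ A, ‖v k x‖ ≤ C)
    (hlim : ∀ᵐ x ∂volume.restrict A, Tendsto (fun k => v k x) atTop (𝓝 (u x))) :
    relaxedArea u A ≤ liminf (fun k => classicalArea A (v k)) atTop := by
  have hvm : ∀ k, AEStronglyMeasurable (v k) (volume.restrict A) := fun k =>
    (hv k).continuousOn.aestronglyMeasurable hA
  have hvC : ∀ k, ∀ᵐ x ∂volume.restrict A, ‖v k x‖ ≤ C := fun k =>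
    (ae_restrict_mem hA).mono (hC k)
  have hconst : IntegrableOn (fun _ => C) A := integrableOn_const hA'
  refine sInf_le ⟨v, hv, fun k => (hconst.mono' (hvm k) (hvC k)).sub hu, ?_, rfl⟩
  have hzero : ∀ᵐ x ∂volume.restrict A, Tendsto (fun k => ‖v k x - u x‖) atTop (𝓝 0) :=
    hlim.mono fun x hx => tendsto_iff_norm_sub_tendsto_zero.1 hx
  simpa using tendsto_integral_of_dominated_convergence (fun x => C + ‖u x‖)
    (fun k => ((hvm k).sub hu.1).norm) (hconst.add hu.norm)
    (fun k => (hvC k).mono fun x hx => by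
      simpa using (norm_sub_le (v k x) (u x)).trans (add_le_add_left hx _)) hzero

theorem relaxedArea_le_liminf_of_norm_eq_one {F : Type*} [NormedAddCommGroup F] [NormedSpace ℝ F]
    (e : F ≃ₗᵢ[ℝ] R2) {A : Set R2} {u : R2 → R2} {v : ℕ → R2 → F} (hA : IsOpen A)
    (hA' : volume A ≠ ⊤) (hu : IntegrableOn u A) (hv : ∀ k, ContDiffOn ℝ 1 (v k) A)
    (hv1 : ∀ k, ∀ x ∈ A, ‖v k x‖ = 1)
    (hlim : ∀ᵐ x ∂volume.restrict A, Tendsto (fun k => v k x) atTop (𝓝 (e.symm (u x)))) :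
    relaxedArea u A ≤
      liminf (fun k => ∫⁻ x in A, ENNReal.ofReal √(1 + ‖grad (v k) x‖ ^ 2)) atTop := by
  have hev : ∀ k, ContDiffOn ℝ 1 (fun x => e (v k x)) A := fun k =>
    e.contDiff.comp_contDiffOn (hv k)
  have hev1 : ∀ k, ∀ x ∈ A, ‖e (v k x)‖ = 1 := fun k x hx => by simp [hv1 k x hx]
  have hlim' : ∀ᵐ x ∂volume.restrict A, Tendsto (fun k => e (v k x)) atTop (𝓝 (u x)) :=
    hlim.mono fun x hx => by simpa [Function.comp_def] using (e.continuous.tendsto _).comp hx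
  simpa only [classicalArea_of_norm_eq_one hA (hev _) (hev1 _),
    norm_grad_linearIsometryEquiv_comp] using
    relaxedArea_le_liminf_of_tendsto_ae hA.measurableSet hA' hu hev
      (fun k x hx => (hev1 k x hx).le) hlim'

theorem lintegral_ofReal_sqrt_one_add_norm_sq {α E : Type*} [MeasurableSpace α] {μ : Measure α}
    [IsFiniteMeasure μ] [NormedAddCommGroup E] {f : α → E} (hf : Integrable f μ) :
    ∫⁻ x, ENNReal.ofReal √(1 + ‖f x‖ ^ 2) ∂μ = ENNReal.ofReal (∫ x, √(1 + ‖f x‖ ^ 2) ∂μ) := by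
  refine (ofReal_integral_eq_lintegral_ofReal ?_ (.of_forall fun x => Real.sqrt_nonneg _)).symm
  refine ((integrable_const (1 : ℝ)).add hf.norm).mono'
    (((hf.1.norm.aemeasurable.pow_const 2).const_add 1).sqrt.aestronglyMeasurable)
    (.of_forall fun x => ?_)
  rw [Real.norm_of_nonneg (Real.sqrt_nonneg _)]
  simpa [add_comm] using
    sqrt_one_add_sq_le_add (h := 0) (norm_nonneg (f x)) (norm_nonneg (f x)) (by simp)

theorem HasWeakGrad.exists_unit_tendsto_ae {Ω : Set R2} {U : R2 → ℂ}
    {H : R2 → PiLp 2 fun _ : Fin 2 => ℂ} (h : HasWeakGrad Ω U H) (hΩ : IsOpen Ω)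
    (hΩb : Bornology.IsBounded Ω) (hΩl : HasLipschitzBoundary Ω)
    (hU : ∀ᵐ x ∂volume.restrict Ω, ‖U x‖ = 1) {ε : ℝ} (hε : 0 < ε) :
    ∃ C ⊆ Ω, C.Finite ∧ ∃ v : ℕ → R2 → ℂ, (∀ n, ContDiffOn ℝ 1 (v n) (Ω \ C)) ∧
      (∀ n, ∀ x ∈ Ω \ C, ‖v n x‖ = 1) ∧
      (∀ᵐ x ∂volume.restrict (Ω \ C), Tendsto (fun n => v n x) atTop (𝓝 (U x))) ∧
      liminf (fun n => ∫⁻ x in Ω \ C, ENNReal.ofReal √(1 + ‖grad (v n) x‖ ^ 2)) atTop ≤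
        (∫⁻ x in Ω, ENNReal.ofReal √(1 + ‖H x‖ ^ 2)) + ENNReal.ofReal ε := by
  obtain ⟨_, ha₀⟩ := h.exists_isSmoothApprox hΩ hΩb hΩl (hU.mono fun _ => le_of_eq)
  obtain ⟨a, ha, hae⟩ := ha₀.exists_subseq_tendsto_ae h.integrableOn.1
  have htan := ha.inner_eq_zero_ae hΩ hU h.integrableOn h.integrableOn_grad hae
  have hδ : ENNReal.ofReal (2 / 35 * ε) ≠ 0 := by simpa using hε
  obtain ⟨C, hC, hCf, p, hp, hp1, hpH, hpU⟩ := ha.exists_unit_approx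
    (by simp) (by simp) hΩ.measurableSet hΩb hU h.integrableOn.1 h.integrableOn_grad hae htan hδ
  have hsub : Ω \ C ⊆ Ω := sdiff_subset
  obtain ⟨v, hv, hv1, hvU, hlim⟩ := (ha.mono hsub).exists_unit_tendsto_ae
    (hΩ.sdiff hCf.isClosed) (ae_restrict_of_ae_restrict_of_subset hsub hU)
    (h.integrableOn.1.mono_set hsub) (h.integrableOn_grad.mono_set hsub)
    (ae_restrict_of_ae_restrict_of_subset hsub hae) hp hp1 ((lintegral_mono_set hsub).trans hpH)
    ((lintegral_mono_set hsub).trans hpU) hδ ENNReal.ofReal_ne_top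
  refine ⟨C, hC, hCf, v, hv, hv1, hvU, hlim.trans (add_le_add (lintegral_mono_set hsub) ?_)⟩
  rw [← ENNReal.ofReal_mul (by norm_num), ← mul_assoc]
  norm_num

end RelaxedArea

theorem exists_finite_removal_relaxedArea_le_general (Ω : Set R2) (hΩo : IsOpen Ω)
    (hΩb : Bornology.IsBounded Ω) (hΩl : HasLipschitzBoundary Ω)
    (u : R2 → R2) (G : R2 → Matrix (Fin 2) (Fin 2) ℝ)
    (hu : MemW11 Ω u G) (hS : SphereValued Ω u) :
    ∀ ε : ℝ, 0 < ε → ∃ C : Set R2, C ⊆ Ω ∧ C.Finite ∧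
      relaxedArea u (Ω \ C) ≤
        ENNReal.ofReal ((∫ x in Ω, Real.sqrt (1 + ∑ i, ∑ j, (G x i j) ^ 2)) + ε) := by
  intro ε hε
  let φ : ℂ ≃ₗᵢ[ℝ] R2 := Complex.orthonormalBasisOneI.repr
  obtain ⟨C, hC, hCf, v, hv, hv1, hvu, hlim⟩ :=
    (hu.hasWeakGrad.continuousLinearMap_comp (φ.symm : R2 →L[ℝ] ℂ)).exists_unit_tendsto_ae hΩo hΩb
      hΩl (hS.mono fun x hx => by simpa using hx) hε
  have : IsFiniteMeasure (volume.restrict Ω) := ⟨by simpa using hΩb.measure_lt_top⟩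
  refine ⟨C, hC, hCf, ?_⟩
  calc relaxedArea u (Ω \ C)
      ≤ liminf (fun n => ∫⁻ x in Ω \ C, ENNReal.ofReal √(1 + ‖grad (v n) x‖ ^ 2)) atTop :=
        relaxedArea_le_liminf_of_norm_eq_one φ (hΩo.sdiff hCf.isClosed)
          (hΩb.subset sdiff_subset).measure_lt_top.ne (hu.1.mono_set sdiff_subset) hv hv1 hvu
    _ ≤ (∫⁻ x in Ω, ENNReal.ofReal √(1 + ‖euclideanColumns (G x)‖ ^ 2)) + ENNReal.ofReal ε := by
        simpa [PiLp.norm_sq_eq_of_L2] using hlim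
    _ = ENNReal.ofReal ((∫ x in Ω, √(1 + ∑ i, ∑ j, (G x i j) ^ 2)) + ε) := by
        rw [lintegral_ofReal_sqrt_one_add_norm_sq hu.hasWeakGrad.integrableOn_grad,
          ← ENNReal.ofReal_add (integral_nonneg fun x => Real.sqrt_nonneg _) hε.le]
        simp only [norm_euclideanColumns_sq]

/-- **Theorem (removal of finitely many points).** For `u ∈ W^{1,1}(Ω;S¹)` and
every `ε > 0` there is a finite set `C_ε ⊂ Ω` with
`𝒜(u,Ω∖C_ε) ≤ ∫_Ω √(1+|∇u|²) dx + ε`. -/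
theorem exists_finite_removal_relaxedArea_le (Ω : Set R2) (hΩo : IsOpen Ω)
    (hΩb : Bornology.IsBounded Ω) (hΩc : IsConnected Ω) (hΩl : HasLipschitzBoundary Ω)
    (u : R2 → R2) (G : R2 → Matrix (Fin 2) (Fin 2) ℝ)
    (hu : MemW11 Ω u G) (hS : SphereValued Ω u) :
    ∀ ε : ℝ, 0 < ε → ∃ C : Set R2, C ⊆ Ω ∧ C.Finite ∧
      relaxedArea u (Ω \ C) ≤
        ENNReal.ofReal ((∫ x in Ω, Real.sqrt (1 + ∑ i, ∑ j, (G x i j) ^ 2)) + ε) :=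
  exists_finite_removal_relaxedArea_le_general Ω hΩo hΩb hΩl u G hu hS
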